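/- Let d ≥ 1, let α = (α_1,…,α_d) be a multi-index with α_j > −1/2 for each j, and let β > 0 and λ > 0. Define the Bessel Laguerre potential J_λ^α f(x) = (1/Γ(λ)) ∫_0^∞ s^{λ−1} e^{−s} P_s^α f(x) ds. Then there exists C > 0, depending only on α, d, β, λ, such that for every bounded measurable f on (0,∞)^d satisfying sup_x |∂^n_t P_t^α f(x)| ≤ A t^{β−n} for all t > 0 (n the smallest integer greater than β), one has: sup_x |P_t^α(J_λ^α f)(x)| ≤ ∥f∥_∞ for all t > 0, and sup_x |∂^m_t P_t^α(J_λ^α f)(x)| ≤ C (∥f∥_∞ + A) t^{β+λ−m} for all t > 0, where m is the smallest integer greater than β+λ. In particular J_λ^α maps Lip_β(μ_α) boundedly into Lip_{β+λ}(μ_α). -/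

import Mathlib

open MeasureTheory Real Set

noncomputable def besselI (ν z : ℝ) : ℝ :=
  ∑' m : ℕ, (z / 2) ^ (2 * (m : ℝ) + ν) / (Nat.factorial m * Real.Gamma ((m : ℝ) + ν + 1))

/-- The positive orthant `(0,∞)^d`. -/
def posOrthant (d : ℕ) : Set (Fin d → ℝ) := Set.univ.pi fun _ => Set.Ioi 0

/-- The Poisson–Laguerre kernel `p_t^α(x,y)`. -/
noncomputable def plKernel (d : ℕ) (α : Fin d → ℝ) (t : ℝ) (x y : Fin d → ℝ) : ℝ :=
  (1 / (2 * Real.sqrt π)) *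
    ∫ r in Set.Ioo (0 : ℝ) 1,
      (t * Real.exp (t ^ 2 / (4 * Real.log r)) /
          ((1 - r) ^ d * (-Real.log r) ^ ((3 : ℝ) / 2))) *
        (∏ j, (y j / x j) ^ (α j / 2) *
            Real.exp (-((r * x j + y j) / (1 - r)) - α j * Real.log r / 2) *
            besselI (α j) (2 * Real.sqrt (r * x j * y j) / (1 - r))) / r

/-- The Poisson–Laguerre semigroup `P_t^α f`, with the convention `P_0^α f = f`. -/
noncomputable def plP (d : ℕ) (α : Fin d → ℝ) (t : ℝ)
    (f : (Fin d → ℝ) → ℝ) (x : Fin d → ℝ) : ℝ :=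
  if t = 0 then f x else ∫ y in posOrthant d, plKernel d α t x y * f y

/-- The Bessel Laguerre potential `J_λ^α f`. -/
noncomputable def besselLaguerrePotential (d : ℕ) (α : Fin d → ℝ) (lam : ℝ)
    (f : (Fin d → ℝ) → ℝ) (x : Fin d → ℝ) : ℝ :=
  (1 / Real.Gamma lam) *
    ∫ s in Set.Ioi (0 : ℝ), s ^ (lam - 1) * Real.exp (-s) * plP d α s f x

/-!
The Laguerre heat kernel is a mixture of Gamma densities with Poisson weights, so its Laplace
transform is explicit; since the functions `exp (-n y)` determine a finite measure on the half-line,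
the Chapman–Kolmogorov equations reduce to an identity between rational functions.  Subordination to
the `1/2`-stable law turns this heat semigroup into `P_t`.  The stable densities are differentiable
in `L¹`, with derivative of norm `O(1 / t)`, so `P_t` is a contraction semigroup on the bounded
measurable functions, differentiable in operator norm with `‖∂_t P_t‖ ≤ C / t`.

Everything else is semigroup calculus.  The semigroup law gives `‖∂_t^k P_t‖ ≤ K / t ^ k`, and the
factorisation `∂_t^{k+n} P_t = ∂_t^k P_{t/2} ∂_t^n P_{t/2}` upgrades the Lipschitz condition from
`∂_t^n` to `∂_t^m`.  Finally `∂_t^m P_t (J_λ f)` is the average of `∂_t^m P_{t+s} f` over the Gamma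
law of `s`, whence the bound by
`∫₀^∞ s ^ (λ - 1) (t + s) ^ (β - m) ds = c t ^ (β + λ - m)`, finite because `β + λ < m`.
-/

open Filter ProbabilityTheory
open scoped ENNReal Topology

section GammaMeasure

lemma ae_pos_gammaMeasure (a r : ℝ) : ∀ᵐ s ∂gammaMeasure a r, 0 < s := by
  have hnull : gammaMeasure a r (Iic 0) = 0 := by
    rw [gammaMeasure, withDensity_apply _ measurableSet_Iic,
      ← setLIntegral_congr Iio_ae_eq_Iic, lintegral_gammaPDF_of_nonpos le_rfl]
  filter_upwards [compl_mem_ae_iff.mpr hnull] with s hs using not_le.mp hs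

lemma restrict_Ioi_gammaMeasure (a r : ℝ) :
    (gammaMeasure a r).restrict (Ioi 0) = gammaMeasure a r :=
  Measure.restrict_eq_self_of_ae_mem (ae_pos_gammaMeasure a r)

lemma aestronglyMeasurable_gammaMeasure {F : Type*} [NormedAddCommGroup F] {g : ℝ → F}
    (hg : ContinuousOn g (Ioi 0)) (a r : ℝ) : AEStronglyMeasurable g (gammaMeasure a r) := by
  rw [← restrict_Ioi_gammaMeasure]
  exact hg.aestronglyMeasurable measurableSet_Ioi

lemma integral_gammaMeasure_one {F : Type*} [NormedAddCommGroup F] [NormedSpace ℝ F]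
    {a : ℝ} (ha : 0 < a) (g : ℝ → F) :
    ∫ s, g s ∂gammaMeasure a 1 =
      (1 / Gamma a) • ∫ s in Ioi 0, (s ^ (a - 1) * exp (-s)) • g s := by
  rw [← restrict_Ioi_gammaMeasure, gammaMeasure, restrict_withDensity measurableSet_Ioi,
    integral_withDensity_eq_integral_toReal_smul (f := gammaPDF a 1)
      (measurable_gammaPDFReal a 1).ennreal_ofReal (.of_forall fun _ => ENNReal.ofReal_lt_top),
    ← integral_smul]
  refine setIntegral_congr_fun measurableSet_Ioi fun s hs => ?_
  rw [gammaPDF, ENNReal.toReal_ofReal (gammaPDFReal_nonneg ha one_pos s), gammaPDFReal,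
    if_pos (le_of_lt hs), smul_smul, one_rpow, one_mul, mul_assoc]

lemma integrableOn_rpow_mul_one_add_rpow {a c : ℝ} (ha : 0 < a) (hc : a + c < 0) :
    IntegrableOn (fun v : ℝ => v ^ (a - 1) * (1 + v) ^ c) (Ioi 0) := by
  have hmeas : Measurable fun v : ℝ => v ^ (a - 1) * (1 + v) ^ c := by fun_prop
  rw [← Ioc_union_Ioi_eq_Ioi zero_le_one]
  refine .union ?_ ?_
  · refine Integrable.mono' (g := fun v => v ^ (a - 1)) ?_ hmeas.aestronglyMeasurable ?_
    · exact (intervalIntegrable_iff_integrableOn_Ioc_of_le zero_le_one).mp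
        (intervalIntegral.intervalIntegrable_rpow' (by linarith))
    · filter_upwards [ae_restrict_mem measurableSet_Ioc] with v hv
      have hv0 : 0 < v := hv.1
      rw [norm_of_nonneg (by positivity)]
      exact mul_le_of_le_one_right (by positivity)
        (rpow_le_one_of_one_le_of_nonpos (by linarith) (by linarith))
  · refine Integrable.mono' (g := fun v => v ^ (a - 1 + c)) ?_ hmeas.aestronglyMeasurable ?_
    · exact integrableOn_Ioi_rpow_of_lt (by linarith) one_pos
    · filter_upwards [ae_restrict_mem measurableSet_Ioi] with v hv
      have hv0 : 0 < v := one_pos.trans hv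
      rw [norm_of_nonneg (by positivity), rpow_add hv0]
      gcongr ?_ * ?_
      exact rpow_le_rpow_of_nonpos hv0 (by linarith) (by linarith)

lemma rpow_mul_add_rpow_eq {a c t s : ℝ} (ht : 0 < t) (hs : 0 < s) :
    s ^ (a - 1) * (t + s) ^ c =
      t ^ (a + c - 1) * ((t⁻¹ * s) ^ (a - 1) * (1 + t⁻¹ * s) ^ c) := by
  have hadd : t + s = t * (1 + t⁻¹ * s) := by field_simp
  have hinv : (0 : ℝ) < t⁻¹ := inv_pos.mpr ht
  rw [hadd, mul_rpow ht.le (by positivity), mul_rpow hinv.le hs.le, inv_rpow ht.le,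
    add_sub_right_comm, rpow_add ht]
  field_simp

lemma integrableOn_rpow_mul_add_rpow {a c t : ℝ} (ha : 0 < a) (hc : a + c < 0) (ht : 0 < t) :
    IntegrableOn (fun s : ℝ => s ^ (a - 1) * (t + s) ^ c) (Ioi 0) := by
  have hscaled := (integrableOn_Ioi_comp_mul_left_iff
    (fun v : ℝ => v ^ (a - 1) * (1 + v) ^ c) 0 (inv_pos.mpr ht)).mpr
    (by simpa only [mul_zero] using integrableOn_rpow_mul_one_add_rpow ha hc)
  exact IntegrableOn.congr_fun (hscaled.const_mul (t ^ (a + c - 1)))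
    (fun s hs => (rpow_mul_add_rpow_eq ht hs).symm) measurableSet_Ioi

lemma integral_rpow_mul_add_rpow {t : ℝ} (a c : ℝ) (ht : 0 < t) :
    ∫ s in Ioi 0, s ^ (a - 1) * (t + s) ^ c =
      t ^ (a + c) * ∫ v in Ioi 0, v ^ (a - 1) * (1 + v) ^ c := by
  rw [setIntegral_congr_fun measurableSet_Ioi fun s hs => rpow_mul_add_rpow_eq ht hs,
    integral_const_mul,
    integral_comp_mul_left_Ioi (fun v : ℝ => v ^ (a - 1) * (1 + v) ^ c) 0 (inv_pos.mpr ht),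
    mul_zero, inv_inv, smul_eq_mul, ← mul_assoc, rpow_sub_one ht.ne', div_mul_cancel₀ _ ht.ne']

lemma norm_integral_gammaMeasure_le {F : Type*} [NormedAddCommGroup F] [NormedSpace ℝ F]
    {a c t B : ℝ} (ha : 0 < a) (hc : a + c < 0) (ht : 0 < t) {g : ℝ → F}
    (hg : ∀ s > 0, ‖g s‖ ≤ B * (t + s) ^ c) :
    ‖∫ s, g s ∂gammaMeasure a 1‖ ≤
      (1 / Gamma a * ∫ v in Ioi 0, v ^ (a - 1) * (1 + v) ^ c) * B * t ^ (a + c) := by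
  have := Gamma_pos_of_pos ha
  have hint := (integrableOn_rpow_mul_add_rpow ha hc ht).const_mul B
  calc ‖∫ s, g s ∂gammaMeasure a 1‖
      = 1 / Gamma a * ‖∫ s in Ioi 0, (s ^ (a - 1) * exp (-s)) • g s‖ := by
        rw [integral_gammaMeasure_one ha, norm_smul, norm_of_nonneg (by positivity)]
    _ ≤ 1 / Gamma a * ∫ s in Ioi 0, B * (s ^ (a - 1) * (t + s) ^ c) := by
        gcongr
        refine norm_integral_le_of_norm_le hint ?_
        filter_upwards [ae_restrict_mem measurableSet_Ioi] with s (hs : 0 < s)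
        have hexp : exp (-s) ≤ 1 := exp_le_one_iff.mpr (by linarith)
        calc ‖(s ^ (a - 1) * exp (-s)) • g s‖
            = s ^ (a - 1) * exp (-s) * ‖g s‖ := by
              rw [norm_smul, norm_of_nonneg (by positivity)]
          _ ≤ s ^ (a - 1) * 1 * (B * (t + s) ^ c) := by gcongr; exact hg s hs
          _ = B * (s ^ (a - 1) * (t + s) ^ c) := by ring
    _ = _ := by rw [integral_const_mul, integral_rpow_mul_add_rpow a c ht]; ring

end GammaMeasure

section Semigroup

variable {E : Type*} [NormedAddCommGroup E] [NormedSpace ℝ E] {T : ℝ → E →L[ℝ] E} {C : ℝ}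

/-- A semigroup of contractions `T t`, `t > 0`, that is differentiable in operator norm with
`‖T'(t)‖ ≤ C / t`: the real-variable form of a bounded analytic contraction semigroup.  Nothing is
required at `t = 0`, so that strong continuity is not needed. -/
structure IsAnalyticContractionSemigroup (T : ℝ → E →L[ℝ] E) (C : ℝ) : Prop where
  map_add : ∀ ⦃s⦄, 0 < s → ∀ ⦃t⦄, 0 < t → T (s + t) = T s * T t
  norm_le_one : ∀ ⦃t⦄, 0 < t → ‖T t‖ ≤ 1
  differentiableAt : ∀ ⦃t⦄, 0 < t → DifferentiableAt ℝ T t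
  norm_deriv_le : ∀ ⦃t⦄, 0 < t → ‖deriv T t‖ ≤ C / t

/-- The Bessel potential `Γ(a)⁻¹ ∫₀^∞ s ^ (a - 1) e⁻ˢ T(s) ds` of a family of operators, as a
Bochner integral in operator norm. -/
noncomputable def besselPotential (T : ℝ → E →L[ℝ] E) (a : ℝ) : E →L[ℝ] E :=
  ∫ s, T s ∂gammaMeasure a 1

namespace IsAnalyticContractionSemigroup

lemma differentiableAt_of_add_eq_mul (hT : IsAnalyticContractionSemigroup T C)
    {D : ℝ → E →L[ℝ] E} (hD : ∀ s > 0, ∀ t > 0, D (s + t) = D s * T t) {t : ℝ} (ht : 0 < t) :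
    DifferentiableAt ℝ D t := by
  have hfactor : D =ᶠ[𝓝 t] fun u => D (t / 2) * T (u - t / 2) := by
    filter_upwards [Ioi_mem_nhds (half_lt_self ht)] with u hu
    rw [← hD _ (half_pos ht) _ (sub_pos.mpr hu), add_sub_cancel]
  have hshift : DifferentiableAt ℝ (fun u => T (u - t / 2)) t :=
    differentiableAt_comp_sub_const.mpr (hT.differentiableAt (by linarith))
  exact (hshift.const_mul _).congr_of_eventuallyEq hfactor

lemma iteratedDeriv_add_right (hT : IsAnalyticContractionSemigroup T C) (k : ℕ) :
    ∀ s > 0, ∀ t > 0, iteratedDeriv k T (s + t) = iteratedDeriv k T s * T t := by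
  induction k with
  | zero => simpa only [iteratedDeriv_zero] using fun s hs t ht => hT.map_add hs ht
  | succ k ih =>
    intro s hs t ht
    have hright : (fun u => iteratedDeriv k T (u + t)) =ᶠ[𝓝 s]
        fun u => iteratedDeriv k T u * T t := by
      filter_upwards [Ioi_mem_nhds hs] with u hu using ih u hu t ht
    rw [iteratedDeriv_succ, ← deriv_comp_add_const, hright.deriv_eq,
      deriv_mul_const (hT.differentiableAt_of_add_eq_mul ih hs)]

lemma differentiableAt_iteratedDeriv (hT : IsAnalyticContractionSemigroup T C) (k : ℕ) {t : ℝ}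
    (ht : 0 < t) : DifferentiableAt ℝ (iteratedDeriv k T) t :=
  hT.differentiableAt_of_add_eq_mul (hT.iteratedDeriv_add_right k) ht

lemma iteratedDeriv_add (hT : IsAnalyticContractionSemigroup T C) (m k : ℕ) :
    ∀ s > 0, ∀ t > 0,
      iteratedDeriv (m + k) T (s + t) = iteratedDeriv m T s * iteratedDeriv k T t := by
  induction k with
  | zero => simpa only [iteratedDeriv_zero, add_zero] using hT.iteratedDeriv_add_right m
  | succ k ih =>
    intro s hs t ht
    have hright : (fun u => iteratedDeriv (m + k) T (s + u)) =ᶠ[𝓝 t]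
        fun u => iteratedDeriv m T s * iteratedDeriv k T u := by
      filter_upwards [Ioi_mem_nhds ht] with u hu using ih s hs u hu
    rw [← add_assoc, iteratedDeriv_succ, ← deriv_comp_const_add, hright.deriv_eq,
      deriv_const_mul _ (hT.differentiableAt_iteratedDeriv k ht), iteratedDeriv_succ]

lemma exists_norm_iteratedDeriv_le (hT : IsAnalyticContractionSemigroup T C) (k : ℕ) :
    ∃ K, 0 ≤ K ∧ ∀ t > 0, ‖iteratedDeriv k T t‖ ≤ K / t ^ k := by
  have hC : 0 ≤ C := by simpa using (norm_nonneg _).trans (hT.norm_deriv_le one_pos)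
  induction k with
  | zero =>
    refine ⟨1, zero_le_one, ?_⟩
    simpa only [iteratedDeriv_zero, pow_zero, div_one] using hT.norm_le_one
  | succ k ih =>
    obtain ⟨K, hK, hbound⟩ := ih
    refine ⟨2 ^ (k + 1) * K * C, by positivity, fun t ht => ?_⟩
    have ht2 := half_pos ht
    calc ‖iteratedDeriv (k + 1) T t‖
        = ‖iteratedDeriv k T (t / 2) * deriv T (t / 2)‖ := by
          rw [← iteratedDeriv_one, ← hT.iteratedDeriv_add k 1 _ ht2 _ ht2, add_halves]
      _ ≤ K / (t / 2) ^ k * (C / (t / 2)) := (norm_mul_le _ _).trans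
          (mul_le_mul (hbound _ ht2) (hT.norm_deriv_le ht2) (norm_nonneg _) (by positivity))
      _ = 2 ^ (k + 1) * K * C / t ^ (k + 1) := by rw [div_pow]; field_simp; ring

lemma iteratedDeriv_map {G : Type*} [NormedAddCommGroup G] [NormedSpace ℝ G]
    (hT : IsAnalyticContractionSemigroup T C) (L : (E →L[ℝ] E) →L[ℝ] G) (k : ℕ) :
    ∀ t > 0, iteratedDeriv k (fun u => L (T u)) t = L (iteratedDeriv k T t) := by
  induction k with
  | zero => simp only [iteratedDeriv_zero, implies_true]
  | succ k ih =>
    intro t ht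
    have hnear : iteratedDeriv k (fun u => L (T u)) =ᶠ[𝓝 t] fun u => L (iteratedDeriv k T u) := by
      filter_upwards [Ioi_mem_nhds ht] with u hu using ih u hu
    rw [iteratedDeriv_succ, hnear.deriv_eq, iteratedDeriv_succ]
    exact (L.hasFDerivAt.comp_hasDerivAt t
      (hT.differentiableAt_iteratedDeriv k ht).hasDerivAt).deriv

lemma norm_iteratedDeriv_apply_le (hT : IsAnalyticContractionSemigroup T C) {n k : ℕ} {K : ℝ}
    (hK : ∀ t > 0, ‖iteratedDeriv k T t‖ ≤ K / t ^ k) {f : E} {A β : ℝ}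
    (hf : ∀ t > 0, ‖iteratedDeriv n T t f‖ ≤ A * t ^ (β - n)) {t : ℝ} (ht : 0 < t) :
    ‖iteratedDeriv (k + n) T t f‖ ≤ K * 2 ^ (k + n - β) * A * t ^ (β - (k + n)) := by
  have ht2 := half_pos ht
  calc ‖iteratedDeriv (k + n) T t f‖
      = ‖iteratedDeriv k T (t / 2) (iteratedDeriv n T (t / 2) f)‖ := by
        rw [← mul_apply_eq_comp, ← hT.iteratedDeriv_add k n _ ht2 _ ht2, add_halves]
    _ ≤ K / (t / 2) ^ k * (A * (t / 2) ^ (β - n)) :=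
        ContinuousLinearMap.le_of_opNorm_le_of_le _ (hK _ ht2) (hf _ ht2)
    _ = K * A * (t / 2) ^ (β - (k + n)) := by
        rw [show β - (k + n) = β - n - k by ring, rpow_sub_natCast ht2.ne' (β - n)]
        ring
    _ = K * 2 ^ (k + n - β) * A * t ^ (β - (k + n)) := by
        rw [div_rpow ht.le zero_le_two, ← neg_sub β, rpow_neg zero_le_two]
        ring

lemma integrable_gammaMeasure (hT : IsAnalyticContractionSemigroup T C) {a : ℝ} (ha : 0 < a) :
    Integrable T (gammaMeasure a 1) := by
  have := isProbabilityMeasure_gammaMeasure ha one_pos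
  have hcont : ContinuousOn T (Ioi 0) := fun t ht =>
    (hT.differentiableAt ht).continuousAt.continuousWithinAt
  refine .of_bound (aestronglyMeasurable_gammaMeasure hcont a 1) 1 ?_
  filter_upwards [ae_pos_gammaMeasure a 1] with t ht using hT.norm_le_one ht

lemma norm_besselPotential_le (hT : IsAnalyticContractionSemigroup T C) {a : ℝ} (ha : 0 < a) :
    ‖besselPotential T a‖ ≤ 1 := by
  have := isProbabilityMeasure_gammaMeasure ha one_pos
  have hbound : ∀ᵐ t ∂gammaMeasure a 1, ‖T t‖ ≤ 1 := by
    filter_upwards [ae_pos_gammaMeasure a 1] with t ht using hT.norm_le_one ht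
  simpa only [besselPotential, probReal_univ, mul_one] using
    norm_integral_le_of_norm_le_const hbound

lemma iteratedDeriv_besselPotential [CompleteSpace E] (hT : IsAnalyticContractionSemigroup T C)
    {a : ℝ} (ha : 0 < a) (m : ℕ) {t : ℝ} (ht : 0 < t) (f : E) :
    iteratedDeriv m T t (besselPotential T a f) =
      ∫ s, iteratedDeriv m T (t + s) f ∂gammaMeasure a 1 := by
  have hint := hT.integrable_gammaMeasure ha
  rw [besselPotential, ContinuousLinearMap.integral_apply hint,
    ← ContinuousLinearMap.integral_comp_comm _ (hint.apply_continuousLinearMap f)]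
  refine integral_congr_ae ?_
  filter_upwards [ae_pos_gammaMeasure a 1] with s hs
  rw [hT.iteratedDeriv_add_right m t ht s hs, mul_apply_eq_comp]

theorem exists_norm_iteratedDeriv_besselPotential_le [CompleteSpace E]
    (hT : IsAnalyticContractionSemigroup T C) {β a : ℝ} (ha : 0 < a) {n m : ℕ} (hnm : n ≤ m)
    (hm : β + a < m) :
    ∃ K > 0, ∀ (f : E) (A : ℝ), (∀ t > 0, ‖iteratedDeriv n T t f‖ ≤ A * t ^ (β - n)) →
      ∀ t > 0, ‖iteratedDeriv m T t (besselPotential T a f)‖ ≤ K * A * t ^ (β + a - m) := by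
  obtain ⟨k, rfl⟩ := Nat.exists_eq_add_of_le' hnm
  obtain ⟨K, hK, hbound⟩ := hT.exists_norm_iteratedDeriv_le k
  push_cast at hm ⊢
  set c : ℝ := β - (k + n)
  set I : ℝ := 1 / Gamma a * ∫ v in Ioi 0, v ^ (a - 1) * (1 + v) ^ c
  set L : ℝ := K * 2 ^ (k + n - β)
  have hI : 0 ≤ I := mul_nonneg (by have := Gamma_pos_of_pos ha; positivity)
    (setIntegral_nonneg measurableSet_Ioi fun v (hv : 0 < v) => by positivity)
  refine ⟨I * L + 1, by positivity, fun f A hf t ht => ?_⟩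
  have hA : 0 ≤ A := by simpa using (norm_nonneg _).trans (hf 1 one_pos)
  calc ‖iteratedDeriv (k + n) T t (besselPotential T a f)‖
      ≤ I * (L * A) * t ^ (a + c) := by
        rw [hT.iteratedDeriv_besselPotential ha _ ht]
        exact norm_integral_gammaMeasure_le ha (by linarith) ht fun s hs =>
          hT.norm_iteratedDeriv_apply_le hbound hf (add_pos ht hs)
    _ ≤ (I * L + 1) * A * t ^ (β + a - (k + n)) := by
        rw [show a + c = β + a - (k + n) by ring]
        gcongr ?_ * _
        linarith

end IsAnalyticContractionSemigroup

end Semigroup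

section BoundedMeasurable

variable {X : Type*} [MeasurableSpace X]

/-- The measurable functions in `ℓ^∞(X)`. -/
noncomputable def boundedMeasurableSubmodule (X : Type*) [MeasurableSpace X] :
    Submodule ℝ (lp (fun _ : X => ℝ) ∞) where
  carrier := {f | Measurable (f : X → ℝ)}
  add_mem' hf hg := hf.add hg
  zero_mem' := measurable_const
  smul_mem' c _ hf := hf.const_smul c

/-- The space of bounded measurable functions `X → ℝ` with the supremum norm.  No functions are
identified, so that point evaluations make sense. -/
def BoundedMeasurable (X : Type*) [MeasurableSpace X] : Type _ := boundedMeasurableSubmodule X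

namespace BoundedMeasurable

noncomputable instance : NormedAddCommGroup (BoundedMeasurable X) :=
  inferInstanceAs (NormedAddCommGroup (boundedMeasurableSubmodule X))

noncomputable instance : NormedSpace ℝ (BoundedMeasurable X) :=
  inferInstanceAs (NormedSpace ℝ (boundedMeasurableSubmodule X))

instance : FunLike (BoundedMeasurable X) X ℝ where
  coe f x := f.1 x
  coe_injective _ _ h := Subtype.ext (lp.ext h)

instance : CompleteSpace (BoundedMeasurable X) := by
  refine (isSeqClosed_iff_isClosed.mp fun u f hu hlim => ?_).completeSpace_coe
  refine measurable_of_tendsto_metrizable hu (tendsto_pi_nhds.mpr fun x => ?_)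
  exact ((lp.evalCLM ℝ (fun _ : X => ℝ) ∞ x).continuous.tendsto f).comp hlim

lemma measurable (f : BoundedMeasurable X) : Measurable f := f.2

lemma norm_apply_le (f : BoundedMeasurable X) (x : X) : ‖f x‖ ≤ ‖f‖ :=
  lp.norm_apply_le_norm ENNReal.top_ne_zero f.1 x

lemma norm_le {f : BoundedMeasurable X} {M : ℝ} (hM : 0 ≤ M) (hf : ∀ x, ‖f x‖ ≤ M) : ‖f‖ ≤ M :=
  lp.norm_le_of_forall_le hM hf

/-- The element of `BoundedMeasurable X` given by a measurable function bounded by `M`. -/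
noncomputable def ofBound (f : X → ℝ) (hf : Measurable f) (M : ℝ) (hM : ∀ x, ‖f x‖ ≤ M) :
    BoundedMeasurable X :=
  ⟨⟨f, memℓp_infty ⟨M, forall_mem_range.mpr hM⟩⟩, hf⟩

@[ext] lemma ext {f g : BoundedMeasurable X} (h : ∀ x, f x = g x) : f = g :=
  DFunLike.ext f g h

/-- Point evaluation as a continuous linear functional. -/
noncomputable def eval (x : X) : BoundedMeasurable X →L[ℝ] ℝ :=
  (lp.evalCLM ℝ (fun _ : X => ℝ) ∞ x).comp (boundedMeasurableSubmodule X).subtypeL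

lemma integrable (f : BoundedMeasurable X) (μ : Measure X) [IsFiniteMeasure μ] :
    Integrable f μ :=
  .of_bound f.measurable.aestronglyMeasurable ‖f‖ (.of_forall f.norm_apply_le)

lemma norm_integral_le (f : BoundedMeasurable X) (μ : Measure X) [IsProbabilityMeasure μ] :
    ‖∫ y, f y ∂μ‖ ≤ ‖f‖ := by
  simpa only [probReal_univ, mul_one] using
    norm_integral_le_of_norm_le_const (μ := μ) (.of_forall f.norm_apply_le)

end BoundedMeasurable

end BoundedMeasurable

section Subordination

variable {R X : Type*} [MeasurableSpace R] [MeasurableSpace X] (H : Kernel (R × X) X)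
  [IsMarkovKernel H] (μ : Measure R)

/-- The operator `f ↦ ∫ f(y) H(·, dy)` from functions of `x` to functions of `(r, x)`, for a Markov
kernel `H`. -/
noncomputable def kernelAverage (f : BoundedMeasurable X) : BoundedMeasurable (R × X) :=
  .ofBound (fun p => ∫ y, f y ∂H p) f.measurable.stronglyMeasurable.integral_kernel.measurable
    ‖f‖ fun p => f.norm_integral_le (H p)

lemma kernelAverage_apply (f : BoundedMeasurable X) (p : R × X) :
    kernelAverage H f p = ∫ y, f y ∂H p :=
  rfl

lemma integrable_mul_kernelAverage {g : R → ℝ} (hg : Integrable g μ) (f : BoundedMeasurable X)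
    (x : X) : Integrable (fun r => g r * kernelAverage H f (r, x)) μ :=
  hg.mul_bdd ((kernelAverage H f).measurable.comp (by fun_prop)).aestronglyMeasurable
    (.of_forall fun r => f.norm_integral_le (H (r, x)))

lemma norm_integral_mul_kernelAverage_le (g : R →₁[μ] ℝ) (f : BoundedMeasurable X) (x : X) :
    ‖∫ r, g r * kernelAverage H f (r, x) ∂μ‖ ≤ ‖g‖ * ‖f‖ := by
  rw [L1.norm_eq_integral_norm, ← integral_mul_const]
  refine norm_integral_le_of_norm_le ((L1.integrable_coeFn g).norm.mul_const _)
    (.of_forall fun r => ?_)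
  rw [norm_mul]
  gcongr
  exact f.norm_integral_le _

variable [SFinite μ]

/-- Subordination of a Markov kernel `H` indexed by `r ∈ R` to an integrable weight `g` on `R`:
the operator `f ↦ ∫ g(r) (∫ f(y) H(r, ·, dy)) dμ(r)`. -/
noncomputable def subordinate (g : R →₁[μ] ℝ) (f : BoundedMeasurable X) : BoundedMeasurable X :=
  .ofBound (fun x => ∫ r, g r * kernelAverage H f (r, x) ∂μ)
    (StronglyMeasurable.integral_prod_left'
      (f := fun p : R × X => g p.1 * kernelAverage H f p)
      (((Lp.stronglyMeasurable g).measurable.comp measurable_fst).mul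
        (kernelAverage H f).measurable).stronglyMeasurable).measurable
    (‖g‖ * ‖f‖) (norm_integral_mul_kernelAverage_le H μ g f)

lemma norm_subordinate_le (g : R →₁[μ] ℝ) (f : BoundedMeasurable X) :
    ‖subordinate H μ g f‖ ≤ ‖g‖ * ‖f‖ :=
  BoundedMeasurable.norm_le (by positivity) (norm_integral_mul_kernelAverage_le H μ g f)

lemma subordinate_add_left (g₁ g₂ : R →₁[μ] ℝ) (f : BoundedMeasurable X) :
    subordinate H μ (g₁ + g₂) f = subordinate H μ g₁ f + subordinate H μ g₂ f := by
  ext x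
  change ∫ r, (g₁ + g₂) r * _ ∂μ = ∫ r, g₁ r * _ ∂μ + ∫ r, g₂ r * _ ∂μ
  rw [← integral_add (integrable_mul_kernelAverage H μ (L1.integrable_coeFn g₁) f x)
    (integrable_mul_kernelAverage H μ (L1.integrable_coeFn g₂) f x)]
  refine integral_congr_ae ?_
  filter_upwards [Lp.coeFn_add g₁ g₂] with r hr
  rw [hr, Pi.add_apply, add_mul]

lemma subordinate_smul_left (c : ℝ) (g : R →₁[μ] ℝ) (f : BoundedMeasurable X) :
    subordinate H μ (c • g) f = c • subordinate H μ g f := by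
  ext x
  change ∫ r, (c • g) r * _ ∂μ = c * ∫ r, g r * _ ∂μ
  rw [← integral_const_mul]
  refine integral_congr_ae ?_
  filter_upwards [Lp.coeFn_smul c g] with r hr
  rw [hr, Pi.smul_apply, smul_eq_mul, mul_assoc]

lemma subordinate_add_right (g : R →₁[μ] ℝ) (f₁ f₂ : BoundedMeasurable X) :
    subordinate H μ g (f₁ + f₂) = subordinate H μ g f₁ + subordinate H μ g f₂ := by
  ext x
  change ∫ r, g r * ∫ y, f₁ y + f₂ y ∂H (r, x) ∂μ = ∫ r, g r * _ ∂μ + ∫ r, g r * _ ∂μ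
  rw [← integral_add (integrable_mul_kernelAverage H μ (L1.integrable_coeFn g) f₁ x)
    (integrable_mul_kernelAverage H μ (L1.integrable_coeFn g) f₂ x)]
  simp only [integral_add (f₁.integrable _) (f₂.integrable _), mul_add, kernelAverage_apply]

lemma subordinate_smul_right (c : ℝ) (g : R →₁[μ] ℝ) (f : BoundedMeasurable X) :
    subordinate H μ g (c • f) = c • subordinate H μ g f := by
  ext x
  change ∫ r, g r * ∫ y, c * f y ∂H (r, x) ∂μ = c * ∫ r, g r * _ ∂μ
  simp only [integral_const_mul, mul_left_comm _ c, kernelAverage_apply]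

/-- Subordination as a bounded bilinear map. -/
noncomputable def subordinateL :
    (R →₁[μ] ℝ) →L[ℝ] BoundedMeasurable X →L[ℝ] BoundedMeasurable X :=
  LinearMap.mkContinuous₂
    (LinearMap.mk₂ ℝ (subordinate H μ) (subordinate_add_left H μ) (subordinate_smul_left H μ)
      (subordinate_add_right H μ) (subordinate_smul_right H μ)) 1
    fun g f => (norm_subordinate_le H μ g f).trans_eq (by rw [one_mul])

lemma norm_subordinateL_le (g : R →₁[μ] ℝ) : ‖subordinateL H μ g‖ ≤ ‖g‖ :=
  ContinuousLinearMap.opNorm_le_bound _ (norm_nonneg g) (norm_subordinate_le H μ g)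

end Subordination

section CauchySchlomilch

lemma hasDerivAt_div_self (c : ℝ) {v : ℝ} (hv : v ≠ 0) :
    HasDerivAt (fun v => c / v) (-(c / v ^ 2)) v := by
  simpa only [mul_neg, ← div_eq_mul_inv] using (hasDerivAt_inv hv).const_mul c

lemma image_div_self_Ioi {c : ℝ} (hc : 0 < c) : (fun v => c / v) '' Ioi 0 = Ioi 0 := by
  ext w
  refine ⟨?_, fun hw => ⟨c / w, div_pos hc hw, div_div_cancel₀ hc.ne'⟩⟩
  rintro ⟨v, hv, rfl⟩
  exact div_pos hc hv

lemma image_sub_div_Ioi {c : ℝ} (hc : 0 < c) : (fun v => v - c / v) '' Ioi 0 = univ := by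
  refine eq_univ_of_forall fun x => ?_
  have hlt : |x| < √(x ^ 2 + 4 * c) := by
    rw [← sqrt_sq_eq_abs]
    exact sqrt_lt_sqrt (sq_nonneg x) (by linarith)
  have hpos : 0 < x + √(x ^ 2 + 4 * c) := by linarith [neg_abs_le x]
  refine ⟨(x + √(x ^ 2 + 4 * c)) / 2, half_pos hpos, ?_⟩
  field_simp
  linear_combination sq_sqrt (show 0 ≤ x ^ 2 + 4 * c by positivity)

variable {F : Type*} [NormedAddCommGroup F] [NormedSpace ℝ F]

lemma integral_Ioi_comp_div {c : ℝ} (hc : 0 < c) (g : ℝ → F) :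
    ∫ v in Ioi 0, (c / v ^ 2) • g (c / v) = ∫ v in Ioi 0, g v := by
  have hderiv : ∀ v ∈ Ioi (0 : ℝ), HasDerivWithinAt (fun v => c / v) (-(c / v ^ 2)) (Ioi 0) v :=
    fun v hv => (hasDerivAt_div_self c (ne_of_gt hv)).hasDerivWithinAt
  have hinj : InjOn (fun v => c / v) (Ioi 0) := fun v _ w _ h => by
    rw [← div_div_cancel₀ hc.ne' (b := v), show c / v = c / w from h, div_div_cancel₀ hc.ne']
  conv_rhs => rw [← image_div_self_Ioi hc]
  rw [integral_image_eq_integral_abs_deriv_smul measurableSet_Ioi hderiv hinj]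
  refine setIntegral_congr_fun measurableSet_Ioi fun v (hv : 0 < v) => ?_
  simp only [abs_neg, abs_of_pos (show 0 < c / v ^ 2 by positivity)]

lemma monotoneOn_sub_div {c : ℝ} (hc : 0 < c) : MonotoneOn (fun v => v - c / v) (Ioi 0) :=
  fun _ hv _ _ hvw => sub_le_sub hvw (div_le_div_of_nonneg_left hc.le hv hvw)

lemma hasDerivAt_sub_div (c : ℝ) {v : ℝ} (hv : v ≠ 0) :
    HasDerivAt (fun v => v - c / v) (1 + c / v ^ 2) v :=
  ((hasDerivAt_id v).sub (hasDerivAt_div_self c hv)).congr_deriv (sub_neg_eq_add _ _)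

/-- The Cauchy–Schlömilch substitution.  The substitution `x = v - c / v` produces the weight
`1 + c / v ^ 2`; the two summands contribute equally because `v ↦ c / v` exchanges them. -/
theorem two_smul_integral_Ioi_comp_sub_div {g : ℝ → F} (hg : Integrable g)
    (heven : ∀ x, g (-x) = g x) {c : ℝ} (hc : 0 < c) :
    (2 : ℝ) • ∫ v in Ioi 0, g (v - c / v) = ∫ x, g x := by
  have hderiv : ∀ v ∈ Ioi (0 : ℝ),
      HasDerivWithinAt (fun v => v - c / v) (1 + c / v ^ 2) (Ioi 0) v :=
    fun v hv => (hasDerivAt_sub_div c (ne_of_gt hv)).hasDerivWithinAt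
  have hweighted : IntegrableOn (fun v => (1 + c / v ^ 2) • g (v - c / v)) (Ioi 0) := by
    rwa [← integrableOn_image_iff_integrableOn_deriv_smul_of_monotoneOn measurableSet_Ioi hderiv
      (monotoneOn_sub_div hc), image_sub_div_Ioi hc, integrableOn_univ]
  have hplain : IntegrableOn (fun v => g (v - c / v)) (Ioi 0) := by
    have hmeas : Measurable fun v : ℝ => (1 + c / v ^ 2)⁻¹ := by fun_prop
    refine (hweighted.bdd_smul 1 hmeas.aestronglyMeasurable (.of_forall fun v => ?_)).congr
      (.of_forall fun v => ?_)
    · have hone : 1 ≤ 1 + c / v ^ 2 := le_add_of_nonneg_right (by positivity)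
      rw [norm_of_nonneg (by positivity)]
      exact inv_le_one_of_one_le₀ hone
    · exact inv_smul_smul₀ (by positivity) _
  have hinverted : ∫ v in Ioi 0, (c / v ^ 2) • g (v - c / v) = ∫ v in Ioi 0, g (v - c / v) := by
    rw [← integral_Ioi_comp_div hc fun v => g (v - c / v)]
    simp only [div_div_cancel₀ hc.ne', ← neg_sub (c / _), heven]
  calc (2 : ℝ) • ∫ v in Ioi 0, g (v - c / v)
      = (∫ v in Ioi 0, g (v - c / v)) + ∫ v in Ioi 0, (c / v ^ 2) • g (v - c / v) := by
        rw [hinverted, two_smul]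
    _ = ∫ v in Ioi 0, (1 + c / v ^ 2) • g (v - c / v) := by
        rw [← integral_add hplain]
        · simp only [add_smul, one_smul]
        · refine (hweighted.sub hplain).congr (.of_forall fun v => ?_)
          simp only [Pi.sub_apply, add_smul, one_smul, add_sub_cancel_left]
    _ = ∫ x, g x := by
        rw [← integral_image_eq_integral_deriv_smul_of_monotoneOn measurableSet_Ioi hderiv
          (monotoneOn_sub_div hc), image_sub_div_Ioi hc, setIntegral_univ]

lemma integral_exp_neg_sq_sub_div_sq {c : ℝ} (hc : 0 ≤ c) :
    ∫ v in Ioi 0, exp (-v ^ 2 - (c / v) ^ 2) = √π / 2 * exp (-(2 * c)) := by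
  rcases hc.eq_or_lt with rfl | hc
  · simpa [neg_one_mul] using integral_gaussian_Ioi 1
  have hgauss : Integrable fun x : ℝ => exp (-1 * x ^ 2) := integrable_exp_neg_mul_sq one_pos
  have hschlomilch := two_smul_integral_Ioi_comp_sub_div hgauss (fun x => by rw [neg_sq]) hc
  have hcomplete : ∀ v ∈ Ioi (0 : ℝ),
      exp (-v ^ 2 - (c / v) ^ 2) = exp (-(2 * c)) * exp (-1 * (v - c / v) ^ 2) := by
    intro v (hv : 0 < v)
    rw [← exp_add]
    congr 1
    field_simp
    ring
  rw [integral_gaussian, div_one, smul_eq_mul] at hschlomilch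
  rw [setIntegral_congr_fun measurableSet_Ioi hcomplete, integral_const_mul]
  linear_combination exp (-(2 * c)) / 2 * hschlomilch

end CauchySchlomilch

section MomentDeterminacy

lemma continuous_integral_continuousMap {Y : Type*} [TopologicalSpace Y] [CompactSpace Y]
    [MeasurableSpace Y] [BorelSpace Y] (μ : Measure Y) [IsFiniteMeasure μ] :
    Continuous fun f : C(Y, ℝ) => ∫ y, f y ∂μ :=
  (continuous_integral.comp (ContinuousMap.toLp 1 μ ℝ).continuous).congr fun f =>
    integral_congr_ae (ContinuousMap.coeFn_toLp μ f)

lemma measure_unitInterval_ext_of_integral_pow_eq {μ ν : Measure unitInterval} [IsFiniteMeasure μ]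
    [IsFiniteMeasure ν] (h : ∀ n : ℕ, ∫ x, (x : ℝ) ^ n ∂μ = ∫ x, (x : ℝ) ^ n ∂ν) : μ = ν := by
  have hpoly : EqOn (fun f : C(unitInterval, ℝ) => ∫ x, f x ∂μ) (fun f => ∫ x, f x ∂ν)
      (polynomialFunctions unitInterval) := by
    rw [polynomialFunctions_coe]
    rintro _ ⟨p, rfl⟩
    have hint (n : ℕ) (ρ : Measure unitInterval) [IsFiniteMeasure ρ] :
        Integrable (fun x : unitInterval => p.coeff n * (x : ℝ) ^ n) ρ :=
      ((by fun_prop : Continuous _)).integrable_of_hasCompactSupport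
        (HasCompactSupport.of_compactSpace _)
    simp only [Polynomial.toContinuousMapOnAlgHom_apply, Polynomial.toContinuousMapOn_apply,
      Polynomial.toContinuousMap_apply, Polynomial.eval_eq_sum_range]
    rw [integral_finsetSum _ fun n _ => hint n μ, integral_finsetSum _ fun n _ => hint n ν]
    simp only [integral_const_mul, h]
  have hdense : Dense (polynomialFunctions unitInterval : Set C(unitInterval, ℝ)) := fun f => by
    rw [← Subalgebra.topologicalClosure_coe, polynomialFunctions_closure_eq_top']
    exact Algebra.mem_top
  have heq := (continuous_integral_continuousMap μ).ext_on hdense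
    (continuous_integral_continuousMap ν) hpoly
  exact ext_of_forall_integral_eq_of_IsFiniteMeasure fun f => congrFun heq f.toContinuousMap

theorem measure_ext_of_integral_pow_eq {Y : Type*} [MeasurableSpace Y] [StandardBorelSpace Y]
    {φ : Y → ℝ} (hφ : Measurable φ) (hinj : φ.Injective) (hmem : ∀ y, φ y ∈ unitInterval)
    {μ ν : Measure Y} [IsFiniteMeasure μ] [IsFiniteMeasure ν]
    (h : ∀ n : ℕ, ∫ y, φ y ^ n ∂μ = ∫ y, φ y ^ n ∂ν) : μ = ν := by
  have hemb : MeasurableEmbedding fun y => (⟨φ y, hmem y⟩ : unitInterval) :=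
    hφ.subtype_mk.measurableEmbedding fun y z hyz => hinj (congrArg Subtype.val hyz)
  refine hemb.map_injective (measure_unitInterval_ext_of_integral_pow_eq fun n => ?_)
  simpa only [hemb.integral_map] using h n

end MomentDeterminacy

attribute [local instance] Measure.Subtype.measureSpace

lemma sigmaFinite_volume_subtype {s : Set ℝ} (hs : MeasurableSet s) :
    SigmaFinite (volume : Measure s) := by
  refine .of_map _ measurable_subtype_coe.aemeasurable ?_
  change SigmaFinite ((volume.comap Subtype.val).map Subtype.val)
  rw [map_comap_subtype_coe hs]
  infer_instance

instance : SigmaFinite (volume : Measure (Ioo (0 : ℝ) 1)) :=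
  sigmaFinite_volume_subtype measurableSet_Ioo

instance : SigmaFinite (volume : Measure (Ioi (0 : ℝ))) :=
  sigmaFinite_volume_subtype measurableSet_Ioi

instance : StandardBorelSpace (Ioo (0 : ℝ) 1) := measurableSet_Ioo.standardBorel

instance : StandardBorelSpace (Ioi (0 : ℝ)) := measurableSet_Ioi.standardBorel

section LevyLaw

/-- The density on `(0, 1)` of `exp (-u)`, where `u` has the one-sided `1/2`-stable (Lévy) law of
parameter `t`, that is the law with Laplace transform `n ↦ exp (-t √n)`. -/
noncomputable def levyDensity (t r : ℝ) : ℝ :=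
  t * exp (t ^ 2 / (4 * log r)) / (2 * √π * (-log r) ^ (3 / 2 : ℝ) * r)

lemma measurable_levyDensity (t : ℝ) : Measurable (levyDensity t) := by
  unfold levyDensity
  fun_prop

lemma levyDensity_nonneg {t r : ℝ} (ht : 0 ≤ t) (hr : r ∈ Ioo (0 : ℝ) 1) :
    0 ≤ levyDensity t r := by
  have := hr.1
  have : 0 ≤ -log r := neg_nonneg.mpr (log_neg hr.1 hr.2).le
  unfold levyDensity
  positivity

section GaussianSubstitution

variable {c : ℝ}

lemma hasDerivAt_exp_neg_div_sq {v : ℝ} (hv : v ≠ 0) :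
    HasDerivAt (fun v => exp (-(c / v) ^ 2)) (exp (-(c / v) ^ 2) * (2 * c ^ 2 / v ^ 3)) v := by
  refine ((hasDerivAt_div_self c hv).pow 2).neg.exp.congr_deriv ?_
  simp only [Pi.neg_apply, Pi.pow_apply, Nat.cast_ofNat, Nat.add_one_sub_one, pow_one]
  field_simp

lemma monotoneOn_exp_neg_div_sq (hc : 0 < c) :
    MonotoneOn (fun v => exp (-(c / v) ^ 2)) (Ioi 0) := by
  intro v (hv : 0 < v) w (hw : 0 < w) hvw
  beta_reduce
  gcongr

lemma image_exp_neg_div_sq (hc : 0 < c) :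
    (fun v => exp (-(c / v) ^ 2)) '' Ioi 0 = Ioo 0 1 := by
  ext r
  constructor
  · rintro ⟨v, hv : 0 < v, rfl⟩
    exact ⟨exp_pos _, exp_lt_one_iff.mpr (neg_neg_of_pos (by positivity))⟩
  · rintro ⟨hr₀, hr₁⟩
    have hlog : 0 < -log r := neg_pos.mpr (log_neg hr₀ hr₁)
    refine ⟨c / √(-log r), div_pos hc (sqrt_pos.mpr hlog), ?_⟩
    beta_reduce
    rw [div_div_cancel₀ hc.ne', sq_sqrt hlog.le, neg_neg, exp_log hr₀]

lemma deriv_mul_levyDensity_exp_neg_div_sq (hc : 0 < c) {v : ℝ} (hv : 0 < v) :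
    exp (-(c / v) ^ 2) * (2 * c ^ 2 / v ^ 3) * levyDensity (2 * c) (exp (-(c / v) ^ 2)) =
      2 / √π * exp (-v ^ 2) := by
  have hpow : ((c / v) ^ 2) ^ (3 / 2 : ℝ) = (c / v) ^ 3 := by
    rw [← rpow_natCast_mul (by positivity), ← rpow_natCast]
    norm_num
  have hexponent : (2 * c) ^ 2 / (4 * -(c / v) ^ 2) = -v ^ 2 := by
    field_simp
    norm_num
  rw [levyDensity, log_exp, neg_neg, hpow, hexponent]
  field_simp

variable {t : ℝ} {F : Type*} [NormedAddCommGroup F] [NormedSpace ℝ F]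

lemma integrableOn_levyDensity_smul_iff (ht : 0 < t) (f : ℝ → F) :
    IntegrableOn (fun r => levyDensity t r • f r) (Ioo 0 1) ↔
      IntegrableOn (fun v => (2 / √π * exp (-v ^ 2)) • f (exp (-(t / 2 / v) ^ 2))) (Ioi 0) := by
  have hc := half_pos ht
  rw [← image_exp_neg_div_sq hc, integrableOn_image_iff_integrableOn_deriv_smul_of_monotoneOn
    measurableSet_Ioi (fun v hv => (hasDerivAt_exp_neg_div_sq (ne_of_gt hv)).hasDerivWithinAt)
    (monotoneOn_exp_neg_div_sq hc)]
  refine integrableOn_congr_fun (fun v hv => ?_) measurableSet_Ioi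
  simp only [smul_smul, ← deriv_mul_levyDensity_exp_neg_div_sq hc hv,
    mul_div_cancel₀ t two_ne_zero]

lemma integral_levyDensity_smul (ht : 0 < t) (f : ℝ → F) :
    ∫ r in Ioo 0 1, levyDensity t r • f r =
      ∫ v in Ioi 0, (2 / √π * exp (-v ^ 2)) • f (exp (-(t / 2 / v) ^ 2)) := by
  have hc := half_pos ht
  rw [← image_exp_neg_div_sq hc, integral_image_eq_integral_deriv_smul_of_monotoneOn
    measurableSet_Ioi (fun v hv => (hasDerivAt_exp_neg_div_sq (ne_of_gt hv)).hasDerivWithinAt)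
    (monotoneOn_exp_neg_div_sq hc)]
  refine setIntegral_congr_fun measurableSet_Ioi fun v hv => ?_
  simp only [smul_smul, ← deriv_mul_levyDensity_exp_neg_div_sq hc hv,
    mul_div_cancel₀ t two_ne_zero]

lemma integrableOn_levyDensity (ht : 0 < t) : IntegrableOn (levyDensity t) (Ioo 0 1) := by
  have hgauss := ((integrable_exp_neg_mul_sq one_pos).const_mul (2 / √π)).integrableOn (s := Ioi 0)
  simpa only [smul_eq_mul, mul_one, neg_mul, one_mul] using
    (integrableOn_levyDensity_smul_iff ht fun _ => (1 : ℝ)).mpr (by simpa using hgauss)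

lemma integral_levyDensity_mul_pow (ht : 0 < t) (n : ℕ) :
    ∫ r in Ioo 0 1, levyDensity t r * r ^ n = exp (-(t * √n)) := by
  have hterm : ∀ v ∈ Ioi (0 : ℝ), (2 / √π * exp (-v ^ 2)) • exp (-(t / 2 / v) ^ 2) ^ n =
      2 / √π * exp (-v ^ 2 - (t / 2 * √n / v) ^ 2) := by
    intro v _
    rw [smul_eq_mul, ← exp_nat_mul, mul_assoc, ← exp_add, mul_div_right_comm, mul_pow,
      sq_sqrt n.cast_nonneg]
    ring_nf
  simp only [← smul_eq_mul (levyDensity t _), integral_levyDensity_smul ht]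
  rw [setIntegral_congr_fun measurableSet_Ioi hterm, integral_const_mul,
    integral_exp_neg_sq_sub_div_sq (by positivity)]
  field_simp

end GaussianSubstitution

lemma levyDensity_neg (t : ℝ) : levyDensity (-t) = -levyDensity t := by
  ext r
  rw [Pi.neg_apply, levyDensity, levyDensity, neg_sq, neg_mul, neg_div]

lemma levyDensity_zero : levyDensity 0 = 0 := by
  ext r
  rw [levyDensity, zero_mul, zero_div, Pi.zero_apply]

lemma integrable_levyDensity (t : ℝ) : Integrable fun r : Ioo (0 : ℝ) 1 => levyDensity t r := by
  suffices IntegrableOn (levyDensity t) (Ioo 0 1) from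
    (integrableOn_iff_comap_subtypeVal measurableSet_Ioo).mp this
  rcases lt_trichotomy t 0 with ht | rfl | ht
  · simpa only [levyDensity_neg, neg_neg] using (integrableOn_levyDensity (neg_pos.mpr ht)).neg
  · exact levyDensity_zero ▸ integrableOn_zero
  · exact integrableOn_levyDensity ht

/-- The law on `(0, 1)` with density `levyDensity t`. -/
noncomputable def levyMeasure (t : ℝ) : Measure (Ioo (0 : ℝ) 1) :=
  volume.withDensity fun r => .ofReal (levyDensity t r)

instance (t : ℝ) : IsFiniteMeasure (levyMeasure t) :=
  isFiniteMeasure_withDensity_ofReal (integrable_levyDensity t).2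

lemma integral_levyMeasure {F : Type*} [NormedAddCommGroup F] [NormedSpace ℝ F] {t : ℝ}
    (ht : 0 ≤ t) (f : Ioo (0 : ℝ) 1 → F) :
    ∫ r, f r ∂levyMeasure t = ∫ r : Ioo (0 : ℝ) 1, levyDensity t r • f r := by
  rw [levyMeasure, integral_withDensity_eq_integral_toReal_smul
    (f := fun r : Ioo (0 : ℝ) 1 => .ofReal (levyDensity t r))
    ((measurable_levyDensity t).comp measurable_subtype_coe).ennreal_ofReal
    (.of_forall fun _ => ENNReal.ofReal_lt_top)]
  simp only [ENNReal.toReal_ofReal (levyDensity_nonneg ht (Subtype.coe_prop _))]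

lemma integral_pow_levyMeasure {t : ℝ} (ht : 0 < t) (n : ℕ) :
    ∫ r, (r : ℝ) ^ n ∂levyMeasure t = exp (-(t * √n)) := by
  rw [integral_levyMeasure ht.le, ← integral_levyDensity_mul_pow ht,
    ← integral_subtype measurableSet_Ioo]
  rfl

lemma measurable_Ioo_mul :
    Measurable fun p : Ioo (0 : ℝ) 1 × Ioo (0 : ℝ) 1 => p.1 * p.2 :=
  (by fun_prop : Measurable fun p : Ioo (0 : ℝ) 1 × Ioo (0 : ℝ) 1 =>
    (p.1 * p.2 : ℝ)).subtype_mk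

theorem map_mul_levyMeasure_prod {s t : ℝ} (hs : 0 < s) (ht : 0 < t) :
    ((levyMeasure s).prod (levyMeasure t)).map (fun p => p.1 * p.2) = levyMeasure (s + t) := by
  refine measure_ext_of_integral_pow_eq measurable_subtype_coe
    Subtype.val_injective (fun r => Ioo_subset_Icc_self r.2) fun n => ?_
  rw [integral_map measurable_Ioo_mul.aemeasurable (by fun_prop)]
  simp only [Ioo.coe_mul, mul_pow]
  rw [integral_prod_mul (fun r : Ioo (0 : ℝ) 1 => (r : ℝ) ^ n)
    fun r : Ioo (0 : ℝ) 1 => (r : ℝ) ^ n, integral_pow_levyMeasure hs,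
    integral_pow_levyMeasure ht, integral_pow_levyMeasure (add_pos hs ht), ← exp_add]
  ring_nf

end LevyLaw

section LevySemigroup

theorem hasDerivAt_toL1 {Ω : Type*} [MeasurableSpace Ω] {μ : Measure Ω} {w : ℝ → Ω → ℝ}
    {w' : ℝ → Ω → ℝ} {g : Ω → ℝ} {t : ℝ} {s : Set ℝ} (hs : s ∈ 𝓝 t) (hconv : Convex ℝ s)
    (hw : ∀ u, Integrable (w u) μ) (hw' : Integrable (w' t) μ) (hg : Integrable g μ)
    (hderiv : ∀ ω, ∀ u ∈ s, HasDerivAt (w · ω) (w' u ω) u)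
    (hbound : ∀ ω, ∀ u ∈ s, ‖w' u ω‖ ≤ g ω) :
    HasDerivAt (fun u => (hw u).toL1 (w u)) (hw'.toL1 (w' t)) t := by
  rw [hasDerivAt_iff_tendsto_slope, tendsto_iff_norm_sub_tendsto_zero]
  have hnorm (u : ℝ) : ‖slope (fun u => (hw u).toL1 (w u)) t u - hw'.toL1 (w' t)‖ =
      ∫ ω, ‖slope (w · ω) t u - w' t ω‖ ∂μ := by
    rw [slope_def_module, ← Integrable.toL1_sub, ← Integrable.toL1_smul, ← Integrable.toL1_sub,
      L1.norm_of_fun_eq_integral_norm]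
    rfl
  have hmem : s ∈ 𝓝[≠] t := mem_nhdsWithin_of_mem_nhds hs
  have hslope (ω : Ω) {u : ℝ} (hu : u ∈ s) : ‖slope (w · ω) t u‖ ≤ g ω := by
    have hmvt := hconv.norm_image_sub_le_of_norm_hasDerivWithin_le
      (fun v hv => (hderiv ω v hv).hasDerivWithinAt) (hbound ω) (mem_of_mem_nhds hs) hu
    rcases eq_or_ne u t with rfl | hut
    · simpa only [slope_same, norm_zero] using (norm_nonneg _).trans (hbound ω u hu)
    · rw [slope_def_module, norm_smul, norm_inv,
        inv_mul_le_iff₀' (norm_pos_iff.mpr (sub_ne_zero.mpr hut))]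
      exact hmvt
  simp only [hnorm]
  rw [← integral_zero Ω ℝ (μ := μ)]
  refine tendsto_integral_filter_of_dominated_convergence (fun ω => g ω + g ω) ?_ ?_
    (hg.add hg) (.of_forall fun ω => ?_)
  · refine .of_forall fun u => ?_
    exact ((((hw u).sub (hw t)).smul (u - t)⁻¹).sub hw').norm.aestronglyMeasurable
  · filter_upwards [hmem] with u hu
    refine .of_forall fun ω => ?_
    rw [norm_norm]
    exact (norm_sub_le _ _).trans (add_le_add (hslope ω hu) (hbound ω t (mem_of_mem_nhds hs)))
  · rw [← tendsto_iff_norm_sub_tendsto_zero]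
    exact hasDerivAt_iff_tendsto_slope.mp (hderiv ω t (mem_of_mem_nhds hs))

lemma hasDerivAt_levyDensity {t : ℝ} (ht : t ≠ 0) {r : ℝ} (hr : log r ≠ 0) :
    HasDerivAt (levyDensity · r) ((1 / t + t / (2 * log r)) * levyDensity t r) t := by
  unfold levyDensity
  refine (((hasDerivAt_id t).mul ((hasDerivAt_pow 2 t).div_const (4 * log r)).exp).div_const
    (2 * √π * (-log r) ^ (3 / 2 : ℝ) * r)).congr_deriv ?_
  simp only [id]
  field_simp
  ring

lemma levyDensity_le_div_mul {s t : ℝ} (ht : 0 < t) (hts : t ≤ s) {r : ℝ} (hr : r ∈ Ioo (0 : ℝ) 1) :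
    levyDensity s r ≤ s / t * levyDensity t r := by
  have hlog : log r < 0 := log_neg hr.1 hr.2
  have hrpow : 0 < (-log r) ^ (3 / 2 : ℝ) := rpow_pos_of_pos (neg_pos.mpr hlog) _
  have hr₀ := hr.1
  have hs : 0 < s := ht.trans_le hts
  have hexp : exp (s ^ 2 / (4 * log r)) ≤ exp (t ^ 2 / (4 * log r)) :=
    exp_le_exp.mpr (div_le_div_of_nonpos_of_le (by linarith) (by gcongr))
  calc levyDensity s r
      ≤ s * exp (t ^ 2 / (4 * log r)) / (2 * √π * (-log r) ^ (3 / 2 : ℝ) * r) := by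
        unfold levyDensity
        gcongr
    _ = s / t * levyDensity t r := by
        unfold levyDensity
        field_simp

lemma abs_deriv_levyDensity_le {t : ℝ} (ht : 0 < t) {r : ℝ} (hr : r ∈ Ioo (0 : ℝ) 1) :
    |(1 / t + t / (2 * log r)) * levyDensity t r| ≤ 6 / t * levyDensity (t / 2) r := by
  have hlog : log r < 0 := log_neg hr.1 hr.2
  have hlog' : log r ≠ 0 := hlog.ne
  set z := -(t ^ 2 / (4 * log r)) with hz
  have hz₀ : 0 ≤ z := neg_nonneg.mpr (div_nonpos_of_nonneg_of_nonpos (by positivity) (by linarith))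
  have hfactor : 1 / t + t / (2 * log r) = (1 - 2 * z) / t := by
    rw [hz]
    field_simp
    ring
  have hhalf : levyDensity t r = 2 * exp (-(3 / 4 * z)) * levyDensity (t / 2) r := by
    have hsplit : exp (t ^ 2 / (4 * log r)) =
        exp (-(3 / 4 * z)) * exp ((t / 2) ^ 2 / (4 * log r)) := by
      rw [← exp_add, hz]
      ring_nf
    rw [levyDensity, levyDensity, hsplit]
    ring
  have hdecay : |1 - 2 * z| * (2 * exp (-(3 / 4 * z))) ≤ 6 := by
    have habs : |1 - 2 * z| ≤ 1 + 2 * z := abs_le.mpr ⟨by linarith, by linarith⟩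
    have hexp : 1 + 2 * z ≤ 3 * exp (3 / 4 * z) := by linarith [add_one_le_exp (3 / 4 * z)]
    calc |1 - 2 * z| * (2 * exp (-(3 / 4 * z)))
        ≤ 3 * exp (3 / 4 * z) * (2 * exp (-(3 / 4 * z))) := by gcongr; exact habs.trans hexp
      _ = 6 := by rw [exp_neg]; field_simp; norm_num
  have hnonneg := levyDensity_nonneg (half_pos ht).le hr
  calc |(1 / t + t / (2 * log r)) * levyDensity t r|
      = |1 - 2 * z| * (2 * exp (-(3 / 4 * z))) / t * levyDensity (t / 2) r := by
        rw [hfactor, hhalf, abs_mul, abs_div, abs_of_pos ht,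
          abs_of_nonneg (mul_nonneg (by positivity) hnonneg)]
        ring
    _ ≤ 6 / t * levyDensity (t / 2) r := by gcongr

/-- The Lévy density as an element of `L¹(0, 1)`. -/
noncomputable def levyL1 (t : ℝ) : Ioo (0 : ℝ) 1 →₁[volume] ℝ :=
  (integrable_levyDensity t).toL1 _

lemma norm_levyL1 {t : ℝ} (ht : 0 < t) : ‖levyL1 t‖ = 1 := by
  have hmass := integral_pow_levyMeasure ht 0
  rw [integral_levyMeasure ht.le] at hmass
  simp only [pow_zero, smul_eq_mul, mul_one, Nat.cast_zero, sqrt_zero, mul_zero, neg_zero,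
    exp_zero] at hmass
  rw [levyL1, L1.norm_of_fun_eq_integral_norm]
  exact (integral_congr_ae (.of_forall fun r : Ioo (0 : ℝ) 1 =>
    norm_of_nonneg (levyDensity_nonneg ht.le r.2))).trans hmass

lemma integrable_deriv_levyDensity {t : ℝ} (ht : 0 < t) :
    Integrable fun r : Ioo (0 : ℝ) 1 => (1 / t + t / (2 * log r)) * levyDensity t r :=
  ((integrable_levyDensity (t / 2)).const_mul (6 / t)).mono'
    ((by fun_prop : Measurable fun r : ℝ => 1 / t + t / (2 * log r)).mul
      (measurable_levyDensity t) |>.comp measurable_subtype_coe).aestronglyMeasurable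
    (.of_forall fun r => abs_deriv_levyDensity_le ht r.2)

lemma hasDerivAt_levyL1 {t : ℝ} (ht : 0 < t) :
    HasDerivAt levyL1 ((integrable_deriv_levyDensity ht).toL1 _) t := by
  have hball {u : ℝ} (hu : u ∈ Ioi (t / 2)) : 0 < u := (half_pos ht).trans hu
  refine hasDerivAt_toL1 (Ioi_mem_nhds (half_lt_self ht)) (convex_Ioi _) integrable_levyDensity
    (integrable_deriv_levyDensity ht) ((integrable_levyDensity (t / 4)).const_mul (12 / t))
    (fun r u hu => hasDerivAt_levyDensity (hball hu).ne' (log_neg r.2.1 r.2.2).ne)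
    fun r u hu => (abs_deriv_levyDensity_le (hball hu) r.2).trans ?_
  have hu₀ := hball hu
  have hmono := levyDensity_le_div_mul (by linarith : 0 < t / 4)
    (by linarith [show t / 2 < u from hu] : t / 4 ≤ u / 2) r.2
  calc 6 / u * levyDensity (u / 2) r
      ≤ 6 / u * (u / 2 / (t / 4) * levyDensity (t / 4) r) := by gcongr
    _ = 12 / t * levyDensity (t / 4) r := by
        field_simp
        ring

lemma norm_deriv_levyL1_le {t : ℝ} (ht : 0 < t) : ‖deriv levyL1 t‖ ≤ 6 / t := by
  have hmass := norm_levyL1 (half_pos ht)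
  rw [levyL1, L1.norm_of_fun_eq_integral_norm] at hmass
  rw [(hasDerivAt_levyL1 ht).deriv, L1.norm_of_fun_eq_integral_norm]
  calc ∫ r : Ioo (0 : ℝ) 1, ‖(1 / t + t / (2 * log r)) * levyDensity t r‖
      ≤ ∫ r : Ioo (0 : ℝ) 1, 6 / t * ‖levyDensity (t / 2) r‖ :=
        integral_mono (integrable_deriv_levyDensity ht).norm
          ((integrable_levyDensity (t / 2)).norm.const_mul _) fun r =>
            (abs_deriv_levyDensity_le ht r.2).trans (by gcongr; exact le_norm_self _)
    _ = 6 / t := by rw [integral_const_mul, hmass, mul_one]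

end LevySemigroup

section PoissonSemigroup

variable {R X : Type*} [MeasurableSpace R] [MeasurableSpace X]

/-- The Chapman–Kolmogorov equations for a family of transition kernels `H (r, ·)` indexed
multiplicatively, so that `r = exp (-u)` for the usual time parameter `u`. -/
def IsChapmanKolmogorov [Mul R] (H : Kernel (R × X) X) : Prop :=
  ∀ r s, H.sectR s ∘ₖ H.sectR r = H.sectR (r * s)

lemma IsChapmanKolmogorov.integral_kernelAverage [Mul R] {H : Kernel (R × X) X} [IsMarkovKernel H]
    (hH : IsChapmanKolmogorov H) (f : BoundedMeasurable X) (r s : R) (x : X) :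
    ∫ y, kernelAverage H f (s, y) ∂H (r, x) = kernelAverage H f (r * s, x) := by
  simp only [kernelAverage_apply, ← Kernel.sectR_apply, ← hH r s]
  rw [Kernel.integral_comp (f.integrable _)]

variable (H : Kernel (Ioo (0 : ℝ) 1 × X) X) [IsMarkovKernel H]

/-- The Poisson semigroup of a heat semigroup `H`, that is its Bochner subordination to the
one-sided `1/2`-stable law: formally `exp (-t √L)` if `H (r, ·) = r ^ L`. -/
noncomputable def poissonSemigroup (t : ℝ) : BoundedMeasurable X →L[ℝ] BoundedMeasurable X :=
  subordinateL H volume (levyL1 t)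

lemma poissonSemigroup_apply (t : ℝ) (f : BoundedMeasurable X) (x : X) :
    poissonSemigroup H t f x =
      ∫ r : Ioo (0 : ℝ) 1, levyDensity t r * kernelAverage H f (r, x) := by
  refine integral_congr_ae ?_
  filter_upwards [(integrable_levyDensity t).coeFn_toL1] with r hr
  rw [levyL1, hr]

lemma poissonSemigroup_apply_eq_integral_levyMeasure {t : ℝ} (ht : 0 ≤ t)
    (f : BoundedMeasurable X) (x : X) :
    poissonSemigroup H t f x = ∫ r, kernelAverage H f (r, x) ∂levyMeasure t := by
  rw [poissonSemigroup_apply, integral_levyMeasure ht]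
  rfl

lemma hasDerivAt_poissonSemigroup {t : ℝ} (ht : 0 < t) :
    HasDerivAt (poissonSemigroup H) (subordinateL H volume (deriv levyL1 t)) t :=
  (ContinuousLinearMap.hasFDerivAt (subordinateL H volume)).comp_hasDerivAt t
    (hasDerivAt_levyL1 ht).differentiableAt.hasDerivAt

variable {H}

theorem IsChapmanKolmogorov.poissonSemigroup_add (hH : IsChapmanKolmogorov H) {s t : ℝ}
    (hs : 0 < s) (ht : 0 < t) :
    poissonSemigroup H (s + t) = poissonSemigroup H s * poissonSemigroup H t := by
  ext f x
  have hK := (kernelAverage H f).measurable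
  have hfubini (r : Ioo (0 : ℝ) 1) : Integrable
      (Function.uncurry fun y q => kernelAverage H f (q, y)) ((H (r, x)).prod (levyMeasure t)) :=
    .of_bound (hK.comp measurable_swap).aestronglyMeasurable ‖kernelAverage H f‖
      (.of_forall fun p => (kernelAverage H f).norm_apply_le p.swap)
  have hsection : Measurable fun r => kernelAverage H f (r, x) := hK.comp measurable_prodMk_right
  have hmul : Measurable fun p : Ioo (0 : ℝ) 1 × Ioo (0 : ℝ) 1 =>
      kernelAverage H f (p.1 * p.2, x) := hsection.comp measurable_Ioo_mul
  symm
  calc poissonSemigroup H s (poissonSemigroup H t f) x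
      = ∫ r, ∫ y, ∫ q, kernelAverage H f (q, y) ∂levyMeasure t ∂H (r, x) ∂levyMeasure s := by
        simp only [poissonSemigroup_apply_eq_integral_levyMeasure H hs.le,
          kernelAverage_apply H (poissonSemigroup H t f),
          poissonSemigroup_apply_eq_integral_levyMeasure H ht.le]
    _ = ∫ r, ∫ q, ∫ y, kernelAverage H f (q, y) ∂H (r, x) ∂levyMeasure t ∂levyMeasure s :=
        integral_congr_ae (.of_forall fun r => integral_integral_swap (hfubini r))
    _ = ∫ r, ∫ q, kernelAverage H f (r * q, x) ∂levyMeasure t ∂levyMeasure s := by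
        simp only [hH.integral_kernelAverage]
    _ = ∫ p, kernelAverage H f (p.1 * p.2, x) ∂(levyMeasure s).prod (levyMeasure t) :=
        integral_integral (.of_bound hmul.aestronglyMeasurable ‖kernelAverage H f‖
          (.of_forall fun p => (kernelAverage H f).norm_apply_le _))
    _ = ∫ r, kernelAverage H f (r, x) ∂levyMeasure (s + t) := by
        rw [← map_mul_levyMeasure_prod hs ht, integral_map measurable_Ioo_mul.aemeasurable
          hsection.aestronglyMeasurable]
    _ = poissonSemigroup H (s + t) f x :=
        (poissonSemigroup_apply_eq_integral_levyMeasure H (add_pos hs ht).le f x).symm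

theorem IsChapmanKolmogorov.isAnalyticContractionSemigroup_poissonSemigroup
    (hH : IsChapmanKolmogorov H) :
    IsAnalyticContractionSemigroup (poissonSemigroup H) 6 where
  map_add _ hs _ ht := hH.poissonSemigroup_add hs ht
  norm_le_one t ht := (norm_subordinateL_le H volume _).trans_eq (norm_levyL1 ht)
  differentiableAt _ ht := (hasDerivAt_poissonSemigroup H ht).differentiableAt
  norm_deriv_le t ht := by
    rw [(hasDerivAt_poissonSemigroup H ht).deriv]
    exact (norm_subordinateL_le H volume _).trans (norm_deriv_levyL1_le ht)

end PoissonSemigroup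

section ProductKernel

theorem lintegral_fin_nat_prod_eq_prod {n : ℕ} {E : Fin n → Type*} {mE : ∀ i, MeasurableSpace (E i)}
    {μ : ∀ i, Measure (E i)} [∀ i, SigmaFinite (μ i)] {f : ∀ i, E i → ℝ≥0∞}
    (hf : ∀ i, Measurable (f i)) :
    ∫⁻ x, ∏ i, f i (x i) ∂Measure.pi μ = ∏ i, ∫⁻ x, f i x ∂μ i := by
  induction n with
  | zero =>
    simp only [Finset.univ_eq_empty, Finset.prod_empty, lintegral_one, Measure.pi_empty_univ]
  | succ n ih =>
    calc ∫⁻ x, ∏ i, f i (x i) ∂Measure.pi μ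
        = ∫⁻ x, f 0 x.1 * ∏ i : Fin n, f i.succ (x.2 i)
            ∂(μ 0).prod (Measure.pi fun i => μ i.succ) := by
          rw [← ((measurePreserving_piFinSuccAbove μ 0).symm).lintegral_comp_emb
            (MeasurableEquiv.measurableEmbedding _)]
          simp_rw [Fin.prod_univ_succ]
          rfl
      _ = (∫⁻ x, f 0 x ∂μ 0) * ∏ i : Fin n, ∫⁻ x, f i.succ x ∂μ i.succ := by
          rw [← ih fun i => hf i.succ]
          exact lintegral_prod_mul (ν := .pi fun i => μ i.succ)
            (g := fun x : ∀ i : Fin n, E i.succ => ∏ i, f i.succ (x i))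
            (hf 0).aemeasurable (Finset.measurable_fun_prod _ fun i _ =>
              (hf i.succ).comp (measurable_pi_apply i)).aemeasurable
      _ = ∏ i, ∫⁻ x, f i x ∂μ i := by rw [Fin.prod_univ_succ]

variable {ι : Type*} [Fintype ι] {E : ι → Type*} [∀ i, MeasurableSpace (E i)]

theorem lintegral_fintype_prod_eq_prod {μ : ∀ i, Measure (E i)} [∀ i, SigmaFinite (μ i)]
    {f : ∀ i, E i → ℝ≥0∞} (hf : ∀ i, Measurable (f i)) :
    ∫⁻ x, ∏ i, f i (x i) ∂Measure.pi μ = ∏ i, ∫⁻ x, f i x ∂μ i := by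
  let e := (Fintype.equivFin ι).symm
  rw [← (measurePreserving_piCongrLeft _ e).lintegral_comp_emb
    (MeasurableEquiv.measurableEmbedding _)]
  simp_rw [← e.prod_comp, MeasurableEquiv.coe_piCongrLeft, Equiv.piCongrLeft_apply_apply]
  exact lintegral_fin_nat_prod_eq_prod fun i => hf (e i)

theorem pi_withDensity {μ : ∀ i, Measure (E i)} [∀ i, SigmaFinite (μ i)] {f : ∀ i, E i → ℝ≥0∞}
    (hf : ∀ i, Measurable (f i)) [∀ i, SigmaFinite ((μ i).withDensity (f i))] :
    Measure.pi (fun i => (μ i).withDensity (f i)) =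
      (Measure.pi μ).withDensity fun x => ∏ i, f i (x i) := by
  refine Measure.pi_eq fun s hs => ?_
  rw [withDensity_apply _ (.univ_pi hs), Measure.restrict_pi_pi, lintegral_fintype_prod_eq_prod hf]
  exact Finset.prod_congr rfl fun i _ => (withDensity_apply _ (hs i)).symm

variable {R : Type*} [MeasurableSpace R] (K : ∀ i, Kernel (R × E i) (E i))
  [∀ i, IsMarkovKernel (K i)]

/-- The product of Markov kernels with a common parameter `r ∈ R`: under it the coordinates evolve
independently. -/
noncomputable def piKernel : Kernel (R × ∀ i, E i) (∀ i, E i) where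
  toFun p := Measure.pi fun i => K i (p.1, p.2 i)
  measurable' := by
    refine .measure_of_isPiSystem_of_isProbabilityMeasure generateFrom_pi.symm isPiSystem_pi ?_
    rintro _ ⟨s, hs, rfl⟩
    simp_rw [Measure.pi_pi]
    exact Finset.measurable_fun_prod _ fun i _ =>
      ((K i).measurable_coe (hs i (mem_univ i))).comp (by fun_prop)

lemma piKernel_apply (p : R × ∀ i, E i) :
    piKernel K p = Measure.pi fun i => K i (p.1, p.2 i) :=
  rfl

instance : IsMarkovKernel (piKernel K) :=
  ⟨fun p => by rw [piKernel_apply]; infer_instance⟩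

theorem IsChapmanKolmogorov.piKernel [Mul R] {K : ∀ i, Kernel (R × E i) (E i)}
    [∀ i, IsMarkovKernel (K i)] (hK : ∀ i, IsChapmanKolmogorov (K i)) :
    IsChapmanKolmogorov (piKernel K) := by
  intro r s
  ext1 x
  refine (Measure.pi_eq fun B hB => ?_).symm
  have hmeas (i : ι) : Measurable fun y => K i (s, y) (B i) :=
    ((K i).measurable_coe (hB i)).comp measurable_prodMk_left
  rw [Kernel.comp_apply' _ _ _ (.univ_pi hB)]
  simp only [Kernel.sectR_apply, piKernel_apply, Measure.pi_pi]
  rw [lintegral_fintype_prod_eq_prod hmeas]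
  refine Finset.prod_congr rfl fun i _ => ?_
  rw [← Kernel.sectR_apply (K i) (x i) (r * s), ← hK i r s, Kernel.comp_apply' _ _ _ (hB i)]
  rfl

end ProductKernel

section LaguerreHeatKernel

lemma gammaPDF_mul_exp_neg (a : ℝ) {ρ s y : ℝ} (hρ : 0 < ρ) (hs : 0 ≤ s) :
    gammaPDF a ρ y * .ofReal (exp (-(s * y))) =
      .ofReal ((ρ / (ρ + s)) ^ a) * gammaPDF a (ρ + s) y := by
  have : 0 < ρ + s := by positivity
  rw [gammaPDF, gammaPDF, ← ENNReal.ofReal_mul' (exp_pos _).le,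
    ← ENNReal.ofReal_mul (by positivity)]
  congr 1
  simp only [gammaPDFReal]
  split_ifs
  · rw [div_rpow hρ.le this.le, add_mul, neg_add, exp_add]
    field_simp
  · rw [zero_mul, mul_zero]

lemma lintegral_Ioi_gammaPDF {a ρ : ℝ} (ha : 0 < a) (hρ : 0 < ρ) :
    ∫⁻ y : Ioi (0 : ℝ), gammaPDF a ρ y = 1 := by
  refine (lintegral_subtype_comap measurableSet_Ioi (gammaPDF a ρ)).trans ?_
  rw [← lintegral_gammaPDF_eq_one ha hρ,
    ← withDensity_apply _ measurableSet_Ioi, ← setLIntegral_univ, ← withDensity_apply _ .univ]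
  exact measure_congr (eventuallyEq_univ.mpr (ae_pos_gammaMeasure a ρ))

lemma lintegral_gammaPDF_mul_exp_neg {a ρ s : ℝ} (ha : 0 < a) (hρ : 0 < ρ) (hs : 0 ≤ s) :
    ∫⁻ y : Ioi (0 : ℝ), gammaPDF a ρ y * .ofReal (exp (-(s * y))) =
      .ofReal ((ρ / (ρ + s)) ^ a) := by
  simp_rw [gammaPDF_mul_exp_neg a hρ hs]
  rw [lintegral_const_mul _ (by unfold gammaPDF; fun_prop),
    lintegral_Ioi_gammaPDF ha (by positivity), mul_one]

lemma tsum_poisson_mul_rpow (a : ℝ) {l θ : ℝ} (hl : 0 ≤ l) (hθ : 0 < θ) :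
    ∑' m : ℕ, ENNReal.ofReal (exp (-l) * l ^ m / m.factorial) * .ofReal (θ ^ (m + a)) =
      .ofReal (θ ^ a * exp (-(l * (1 - θ)))) := by
  have hterm (m : ℕ) : exp (-l) * l ^ m / m.factorial * θ ^ (m + a) =
      exp (-l) * θ ^ a * ((l * θ) ^ m / m.factorial) := by
    rw [rpow_add hθ, rpow_natCast, mul_pow]
    ring
  have hsum : HasSum (fun m : ℕ => exp (-l) * l ^ m / m.factorial * θ ^ (m + a))
      (exp (-l) * θ ^ a * exp (l * θ)) := by
    simp_rw [hterm, Real.exp_eq_exp_ℝ]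
    exact (NormedSpace.expSeries_div_hasSum_exp (l * θ)).mul_left _
  simp_rw [← ENNReal.ofReal_mul' (rpow_nonneg hθ.le _)]
  rw [← ENNReal.ofReal_tsum_of_nonneg (fun m => by positivity) hsum.summable, hsum.tsum_eq,
    mul_right_comm, ← exp_add, mul_comm]
  ring_nf

/-- The Laguerre heat kernel on the half-line at time `-log r` with respect to Lebesgue measure,
written as a mixture of Gamma densities with Poisson weights. -/
noncomputable def laguerreDensity (a r x y : ℝ) : ℝ≥0∞ :=
  ∑' m : ℕ, .ofReal (exp (-(r * x / (1 - r))) * (r * x / (1 - r)) ^ m / m.factorial) *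
    gammaPDF (m + (a + 1)) (1 - r)⁻¹ y

variable {a : ℝ}

@[fun_prop]
lemma measurable_laguerreDensity {Ω : Type*} [MeasurableSpace Ω] {r x y : Ω → ℝ}
    (hr : Measurable r) (hx : Measurable x) (hy : Measurable y) :
    Measurable fun ω => laguerreDensity a (r ω) (x ω) (y ω) := by
  refine .tsum fun m => .mul (by fun_prop) (.ennreal_ofReal ?_)
  exact .ite (measurableSet_le measurable_const hy) (by fun_prop) measurable_const

lemma lintegral_laguerreDensity_mul_exp_neg (ha : -1 < a) {r x s : ℝ} (hr : r ∈ Ioo (0 : ℝ) 1)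
    (hs : 0 ≤ s) (hx : 0 ≤ x) :
    ∫⁻ y : Ioi (0 : ℝ), laguerreDensity a r x y * .ofReal (exp (-(s * y))) =
      .ofReal ((1 + (1 - r) * s)⁻¹ ^ (a + 1) * exp (-(r * s / (1 + (1 - r) * s) * x))) := by
  have hr₀ := hr.1
  have hr₁ : 0 < 1 - r := sub_pos.mpr hr.2
  have hmeas (m : ℕ) : Measurable (gammaPDF (m + (a + 1)) (1 - r)⁻¹) :=
    (measurable_gammaPDFReal _ _).ennreal_ofReal
  have hshape (m : ℕ) : 0 < (m : ℝ) + (a + 1) := by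
    have : (0 : ℝ) ≤ m := m.cast_nonneg
    linarith
  have hθ : (1 - r)⁻¹ / ((1 - r)⁻¹ + s) = (1 + (1 - r) * s)⁻¹ := by field_simp
  have hexp : r * x / (1 - r) * (1 - (1 + (1 - r) * s)⁻¹) = r * s / (1 + (1 - r) * s) * x := by
    field_simp
    ring
  simp only [laguerreDensity, ← ENNReal.tsum_mul_right, mul_assoc]
  rw [lintegral_tsum fun m => by fun_prop, ← hexp,
    ← tsum_poisson_mul_rpow _ (by positivity) (by positivity)]
  refine tsum_congr fun m => ?_
  rw [lintegral_const_mul _ (by fun_prop),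
    lintegral_gammaPDF_mul_exp_neg (hshape m) (inv_pos.mpr hr₁) hs, hθ]

/-- The heat semigroup of the Laguerre operator on the half-line, as a family of transition kernels
indexed by `r = exp (-u)` instead of the time `u`. -/
noncomputable def laguerreKernel (a : ℝ) : Kernel (Ioo (0 : ℝ) 1 × Ioi (0 : ℝ)) (Ioi (0 : ℝ)) :=
  .withDensity (.const _ volume) fun p y => laguerreDensity a p.1 p.2 y

lemma laguerreKernel_apply (a : ℝ) (p : Ioo (0 : ℝ) 1 × Ioi (0 : ℝ)) :
    laguerreKernel a p =
      volume.withDensity fun y : Ioi (0 : ℝ) => laguerreDensity a p.1 p.2 y := by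
  rw [laguerreKernel, Kernel.withDensity_apply _ (by unfold Function.uncurry; fun_prop),
    Kernel.const_apply]

lemma lintegral_exp_neg_laguerreKernel (ha : -1 < a) (r : Ioo (0 : ℝ) 1) (x : Ioi (0 : ℝ)) {s : ℝ}
    (hs : 0 ≤ s) :
    ∫⁻ y, .ofReal (exp (-(s * y))) ∂laguerreKernel a (r, x) =
      .ofReal ((1 + (1 - r) * s)⁻¹ ^ (a + 1) * exp (-(r * s / (1 + (1 - r) * s) * x))) := by
  rw [laguerreKernel_apply, lintegral_withDensity_eq_lintegral_mul _ (by fun_prop) (by fun_prop)]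
  exact lintegral_laguerreDensity_mul_exp_neg ha r.2 hs (le_of_lt x.2)

lemma isMarkovKernel_laguerreKernel (ha : -1 < a) : IsMarkovKernel (laguerreKernel a) :=
  ⟨fun (r, x) => ⟨by simpa using lintegral_exp_neg_laguerreKernel ha r x le_rfl⟩⟩

lemma integral_exp_neg_laguerreKernel (ha : -1 < a) (r : Ioo (0 : ℝ) 1) (x : Ioi (0 : ℝ)) {s : ℝ}
    (hs : 0 ≤ s) :
    ∫ y, exp (-(s * y)) ∂laguerreKernel a (r, x) =
      (1 + (1 - r) * s)⁻¹ ^ (a + 1) * exp (-(r * s / (1 + (1 - r) * s) * x)) := by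
  have hr₁ : 0 < 1 - (r : ℝ) := sub_pos.mpr r.2.2
  rw [integral_eq_lintegral_of_nonneg_ae (.of_forall fun y => (exp_pos _).le) (by fun_prop),
    lintegral_exp_neg_laguerreKernel ha r x hs, ENNReal.toReal_ofReal (by positivity)]

lemma isChapmanKolmogorov_laguerreKernel (ha : -1 < a) :
    IsChapmanKolmogorov (laguerreKernel a) := by
  intro r s
  have := isMarkovKernel_laguerreKernel ha
  ext1 x
  refine measure_ext_of_integral_pow_eq (φ := fun y : Ioi (0 : ℝ) => exp (-y)) (by fun_prop)
    (fun y z h => Subtype.ext <| neg_injective <| exp_injective h)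
    (fun y => ⟨(exp_pos _).le, exp_le_one_iff.mpr (neg_nonpos.mpr (le_of_lt y.2))⟩) fun n => ?_
  simp only [← exp_nat_mul, mul_neg]
  rw [Kernel.integral_comp (.of_bound (by fun_prop) 1 (.of_forall fun y => ?_))]
  · simp only [Kernel.sectR_apply, integral_exp_neg_laguerreKernel ha _ _ n.cast_nonneg]
    have hr₀ := r.2.1
    have hs₀ := s.2.1
    have hr₁ : 0 < 1 - (r : ℝ) := sub_pos.mpr r.2.2
    have hs₁ : 0 < 1 - (s : ℝ) := sub_pos.mpr s.2.2
    have hmul : 1 + (1 - ↑(r * s)) * (n : ℝ) =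
        (1 + (1 - s) * n) * (1 + (1 - r) * (s * n / (1 + (1 - s) * n))) := by
      push_cast
      field_simp
      ring
    rw [integral_const_mul, integral_exp_neg_laguerreKernel ha _ _ (by positivity), hmul, mul_inv,
      mul_rpow (by positivity) (by positivity), mul_assoc]
    congr 4
    push_cast
    field_simp
  · rw [norm_eq_abs, abs_exp, exp_le_one_iff]
    have : (0 : ℝ) ≤ n * y := mul_nonneg n.cast_nonneg (le_of_lt y.2)
    linarith

end LaguerreHeatKernel

section LaguerreDensityFormula

variable {a r x y : ℝ}

lemma poisson_mul_gammaPDFReal_eq (hr : r ∈ Ioo (0 : ℝ) 1) (hx : 0 < x) (hy : 0 < y) (m : ℕ) :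
    exp (-(r * x / (1 - r))) * (r * x / (1 - r)) ^ m / m.factorial *
        gammaPDFReal (m + (a + 1)) (1 - r)⁻¹ y =
      1 / (1 - r) * ((y / x) ^ (a / 2) * exp (-((r * x + y) / (1 - r)) - a * log r / 2)) *
        ((2 * √(r * x * y) / (1 - r) / 2) ^ (2 * (m : ℝ) + a) /
          (m.factorial * Real.Gamma (m + a + 1))) := by
  have hr₀ := hr.1
  have hr₁ : 0 < 1 - r := sub_pos.mpr hr.2
  have hpow : (r * x / (1 - r)) ^ m * ((1 - r)⁻¹ ^ (m + (a + 1)) * y ^ (m + (a + 1) - 1)) =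
      1 / (1 - r) * ((y / x) ^ (a / 2) * exp (-(a * log r / 2))) *
        (√(r * x * y) / (1 - r)) ^ (2 * (m : ℝ) + a) := by
    rw [← rpow_natCast, rpow_def_of_pos (by positivity), rpow_def_of_pos hy,
      rpow_def_of_pos (by positivity), rpow_def_of_pos (by positivity),
      rpow_def_of_pos (by positivity), log_div (by positivity) hr₁.ne',
      log_div (by positivity) hr₁.ne', log_div hy.ne' hx.ne', log_inv, log_sqrt (by positivity),
      log_mul (by positivity) hy.ne', log_mul hr₀.ne' hx.ne',
      show 1 / (1 - r) = exp (-log (1 - r)) by rw [exp_neg, exp_log hr₁, one_div]]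
    simp only [← exp_add]
    ring_nf
  have hexp : exp (-((r * x + y) / (1 - r)) - a * log r / 2) =
      exp (-(r * x / (1 - r))) * exp (-((1 - r)⁻¹ * y)) * exp (-(a * log r / 2)) := by
    rw [← exp_add, ← exp_add]
    ring_nf
  calc _ = exp (-(r * x / (1 - r))) * exp (-((1 - r)⁻¹ * y)) /
          (m.factorial * Real.Gamma (m + a + 1)) *
          ((r * x / (1 - r)) ^ m * ((1 - r)⁻¹ ^ (m + (a + 1)) * y ^ (m + (a + 1) - 1))) := by
        rw [gammaPDFReal, if_pos hy.le, ← add_assoc]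
        simp only [div_eq_mul_inv, mul_inv]
        ring
    _ = _ := by
        rw [hpow, hexp]
        ring_nf

lemma toReal_laguerreDensity (ha : -1 < a) (hr : r ∈ Ioo (0 : ℝ) 1) (hx : 0 < x) (hy : 0 < y) :
    (laguerreDensity a r x y).toReal =
      1 / (1 - r) * ((y / x) ^ (a / 2) * exp (-((r * x + y) / (1 - r)) - a * log r / 2) *
        besselI a (2 * √(r * x * y) / (1 - r))) := by
  have hr₀ := hr.1
  have hr₁ : 0 < 1 - r := sub_pos.mpr hr.2
  have hfin (m : ℕ) : ENNReal.ofReal (exp (-(r * x / (1 - r))) * (r * x / (1 - r)) ^ m /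
      m.factorial) * gammaPDF (m + (a + 1)) (1 - r)⁻¹ y ≠ ∞ :=
    ENNReal.mul_ne_top ENNReal.ofReal_ne_top ENNReal.ofReal_ne_top
  rw [laguerreDensity, besselI, ENNReal.tsum_toReal_eq hfin, ← mul_assoc, ← tsum_mul_left]
  refine tsum_congr fun m => ?_
  have hshape : 0 < (m : ℝ) + (a + 1) := by
    have : (0 : ℝ) ≤ m := m.cast_nonneg
    linarith
  rw [ENNReal.toReal_mul, gammaPDF, ENNReal.toReal_ofReal (by positivity),
    ENNReal.toReal_ofReal (gammaPDFReal_nonneg hshape (inv_pos.mpr hr₁) y),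
    poisson_mul_gammaPDFReal_eq hr hx hy]

end LaguerreDensityFormula

section PoissonKernelDensity

variable {X : Type*} [MeasurableSpace X] {ν : Measure X}
  {H : Kernel (Ioo (0 : ℝ) 1 × X) X} [IsMarkovKernel H] {h : Ioo (0 : ℝ) 1 → X → ℝ≥0∞} {x : X}

lemma lintegral_eq_one_of_withDensity (hH : ∀ r, H (r, x) = ν.withDensity (h r))
    (r : Ioo (0 : ℝ) 1) : ∫⁻ y, h r y ∂ν = 1 := by
  rw [← setLIntegral_univ, ← withDensity_apply _ .univ, ← hH r, measure_univ]

variable [SFinite ν]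

lemma integrable_levyDensity_mul_toReal (hh : Measurable (Function.uncurry h))
    (hH : ∀ r, H (r, x) = ν.withDensity (h r)) (t : ℝ) :
    Integrable (fun p : Ioo (0 : ℝ) 1 × X => levyDensity t p.1 * (h p.1 p.2).toReal)
      (volume.prod ν) := by
  have hmass := lintegral_eq_one_of_withDensity hH
  have hh_right (r : Ioo (0 : ℝ) 1) : Measurable (h r) := hh.comp measurable_prodMk_left
  have hint (r : Ioo (0 : ℝ) 1) : Integrable (fun y => (h r y).toReal) ν :=
    integrable_toReal_of_lintegral_ne_top (hh_right r).aemeasurable (by simp [hmass])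
  have hone (r : Ioo (0 : ℝ) 1) : ∫ y, (h r y).toReal ∂ν = 1 := by
    rw [integral_toReal (hh_right r).aemeasurable
      (ae_lt_top (hh_right r) (by simp [hmass])), hmass, ENNReal.toReal_one]
  have hmeas : Measurable fun p : Ioo (0 : ℝ) 1 × X => levyDensity t p.1 * (h p.1 p.2).toReal :=
    ((measurable_levyDensity t).comp (by fun_prop)).mul hh.ennreal_toReal
  refine (integrable_prod_iff hmeas.aestronglyMeasurable).mpr
    ⟨.of_forall fun r => (hint r).const_mul (levyDensity t r),
      (integrable_levyDensity t).norm.congr ?_⟩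
  filter_upwards with r
  simp only [norm_mul, norm_of_nonneg ENNReal.toReal_nonneg, integral_const_mul, hone, mul_one]

lemma poissonSemigroup_apply_of_withDensity (hh : Measurable (Function.uncurry h))
    (hH : ∀ r, H (r, x) = ν.withDensity (h r)) (t : ℝ) (f : BoundedMeasurable X) :
    poissonSemigroup H t f x =
      ∫ y, (∫ r : Ioo (0 : ℝ) 1, levyDensity t r * (h r y).toReal) * f y ∂ν := by
  have hh_right (r : Ioo (0 : ℝ) 1) : Measurable (h r) := hh.comp measurable_prodMk_left
  have hint : Integrable (Function.uncurry fun (r : Ioo (0 : ℝ) 1) y =>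
      levyDensity t r * (h r y).toReal * f y) (volume.prod ν) :=
    (integrable_levyDensity_mul_toReal hh hH t).mul_bdd
      (f.measurable.comp measurable_snd).aestronglyMeasurable
      (.of_forall fun p => f.norm_apply_le p.2)
  calc poissonSemigroup H t f x
      = ∫ r : Ioo (0 : ℝ) 1, ∫ y, levyDensity t r * (h r y).toReal * f y ∂ν := by
        rw [poissonSemigroup_apply]
        refine integral_congr_ae (.of_forall fun r => ?_)
        simp only [mul_assoc]
        rw [integral_const_mul, kernelAverage_apply, hH,
          integral_withDensity_eq_integral_toReal_smul (hh_right r) (ae_lt_top (hh_right r)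
            (by simp [lintegral_eq_one_of_withDensity hH]))]
        rfl
    _ = ∫ y, (∫ r : Ioo (0 : ℝ) 1, levyDensity t r * (h r y).toReal * f y) ∂ν :=
        integral_integral_swap hint
    _ = _ := by simp only [integral_mul_const]

end PoissonKernelDensity

section PoissonLaguerreSemigroup

variable {d : ℕ}

lemma measurableEmbedding_pi_coe_Ioi :
    MeasurableEmbedding fun (x : Fin d → Ioi (0 : ℝ)) j => (x j : ℝ) := by
  have hset : MeasurableSet {x : Fin d → ℝ | ∀ j, x j ∈ Ioi 0} := by
    simpa [Set.pi] using MeasurableSet.univ_pi fun _ : Fin d => measurableSet_Ioi (a := (0 : ℝ))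
  exact (MeasurableEmbedding.subtype_coe hset).comp
    MeasurableEquiv.subtypePiEquivPi.symm.measurableEmbedding

lemma setIntegral_posOrthant (g : (Fin d → ℝ) → ℝ) :
    ∫ y in posOrthant d, g y = ∫ y : Fin d → Ioi (0 : ℝ), g fun j => y j := by
  have hpres : MeasurePreserving (fun (x : Fin d → Ioi (0 : ℝ)) j => (x j : ℝ)) volume
      (volume.restrict (posOrthant d)) := by
    rw [posOrthant, volume_pi, volume_pi, Measure.restrict_pi_pi]
    exact measurePreserving_pi _ _ fun _ => measurePreserving_subtype_coe measurableSet_Ioi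
  exact (hpres.integral_comp measurableEmbedding_pi_coe_Ioi g).symm

lemma pi_laguerreKernel (α : Fin d → ℝ) [∀ j, IsMarkovKernel (laguerreKernel (α j))]
    (r : Ioo (0 : ℝ) 1) (x : Fin d → Ioi (0 : ℝ)) :
    piKernel (fun j => laguerreKernel (α j)) (r, x) =
      volume.withDensity fun y => ∏ j, laguerreDensity (α j) r (x j) (y j) := by
  have (j : Fin d) : SigmaFinite ((volume : Measure (Ioi (0 : ℝ))).withDensity
      fun y => laguerreDensity (α j) r (x j) y) := by
    rw [← laguerreKernel_apply (α j) (r, x j)]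
    infer_instance
  simp only [piKernel_apply, laguerreKernel_apply]
  exact pi_withDensity fun j => by fun_prop

lemma plKernel_eq_integral_levyDensity {α : Fin d → ℝ} (hα : ∀ j, -1 < α j) (t : ℝ)
    (x y : Fin d → Ioi (0 : ℝ)) :
    plKernel d α t (fun j => x j) (fun j => y j) =
      ∫ r : Ioo (0 : ℝ) 1,
        levyDensity t r * (∏ j, laguerreDensity (α j) r (x j) (y j)).toReal := by
  rw [plKernel, ← integral_const_mul, ← integral_subtype measurableSet_Ioo]
  refine integral_congr_ae (.of_forall fun r => ?_)
  simp only [ENNReal.toReal_prod, fun j => toReal_laguerreDensity (hα j) r.2 (x j).2 (y j).2,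
    Finset.prod_mul_distrib, Finset.prod_const, Finset.card_univ, Fintype.card_fin, levyDensity,
    div_eq_mul_inv, mul_inv, one_mul, inv_pow]
  ring

variable {α : Fin d → ℝ}

/-- The Poisson–Laguerre semigroup as operators on the bounded measurable functions on the orthant,
whose points are encoded as `Fin d → Ioi 0`. -/
noncomputable def poissonLaguerreSemigroup (hα : ∀ j, -1 < α j) :
    ℝ → BoundedMeasurable (Fin d → Ioi (0 : ℝ)) →L[ℝ] BoundedMeasurable (Fin d → Ioi (0 : ℝ)) :=
  have (j : Fin d) := isMarkovKernel_laguerreKernel (hα j)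
  poissonSemigroup (piKernel fun j => laguerreKernel (α j))

lemma isAnalyticContractionSemigroup_poissonLaguerreSemigroup (hα : ∀ j, -1 < α j) :
    IsAnalyticContractionSemigroup (poissonLaguerreSemigroup hα) 6 :=
  have (j : Fin d) := isMarkovKernel_laguerreKernel (hα j)
  (IsChapmanKolmogorov.piKernel fun j =>
    isChapmanKolmogorov_laguerreKernel (hα j)).isAnalyticContractionSemigroup_poissonSemigroup

variable {g : (Fin d → ℝ) → ℝ} {f : BoundedMeasurable (Fin d → Ioi (0 : ℝ))}

lemma plP_eq_poissonLaguerreSemigroup (hα : ∀ j, -1 < α j) (hgf : ∀ x, g (fun j => x j) = f x)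
    {t : ℝ} (ht : 0 < t) (x : Fin d → Ioi (0 : ℝ)) :
    plP d α t g (fun j => x j) = poissonLaguerreSemigroup hα t f x := by
  have (j : Fin d) := isMarkovKernel_laguerreKernel (hα j)
  have hmeas : Measurable (Function.uncurry fun (r : Ioo (0 : ℝ) 1) (y : Fin d → Ioi (0 : ℝ)) =>
      ∏ j, laguerreDensity (α j) r (x j) (y j)) := by
    unfold Function.uncurry
    fun_prop
  rw [plP, if_neg ht.ne', setIntegral_posOrthant, poissonLaguerreSemigroup,
    poissonSemigroup_apply_of_withDensity hmeas fun r => pi_laguerreKernel α r x]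
  simp only [plKernel_eq_integral_levyDensity hα, hgf]

lemma besselLaguerrePotential_eq_besselPotential (hα : ∀ j, -1 < α j) {lam : ℝ} (hlam : 0 < lam)
    (hgf : ∀ x, g (fun j => x j) = f x) (x : Fin d → Ioi (0 : ℝ)) :
    besselLaguerrePotential d α lam g (fun j => x j) =
      besselPotential (poissonLaguerreSemigroup hα) lam f x := by
  have heval := ((BoundedMeasurable.eval x).comp (.apply ℝ _ f)).integral_comp_comm
    ((isAnalyticContractionSemigroup_poissonLaguerreSemigroup hα).integrable_gammaMeasure hlam)
  refine Eq.trans ?_ heval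
  rw [integral_gammaMeasure_one hlam, besselLaguerrePotential, smul_eq_mul]
  congr 1
  refine setIntegral_congr_fun measurableSet_Ioi fun s hs => ?_
  simp only [plP_eq_poissonLaguerreSemigroup hα hgf hs]
  rfl

lemma iteratedDeriv_plP (hα : ∀ j, -1 < α j) (hgf : ∀ x, g (fun j => x j) = f x) (k : ℕ) {t : ℝ}
    (ht : 0 < t) (x : Fin d → Ioi (0 : ℝ)) :
    iteratedDeriv k (fun u => plP d α u g fun j => x j) t =
      iteratedDeriv k (poissonLaguerreSemigroup hα) t f x := by
  have heq : EqOn (fun u => plP d α u g fun j => x j)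
      (fun u => poissonLaguerreSemigroup hα u f x) (Ioi 0) :=
    fun u hu => plP_eq_poissonLaguerreSemigroup hα hgf hu x
  exact (heq.iteratedDeriv_of_isOpen isOpen_Ioi k ht).trans
    ((isAnalyticContractionSemigroup_poissonLaguerreSemigroup hα).iteratedDeriv_map
      ((BoundedMeasurable.eval x).comp (.apply ℝ _ f)) k t ht)

end PoissonLaguerreSemigroup

theorem besselLaguerrePotential_bounded_on_lipschitz_general {d : ℕ} {α : Fin d → ℝ}
    (hα : ∀ j, -1 < α j) {β lam : ℝ} (hlam : 0 < lam) {n m : ℕ} (hnm : n ≤ m)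
    (hm : β + lam < m) :
    ∃ C > 0, ∀ (f : (Fin d → ℝ) → ℝ) (M A : ℝ), Measurable f → (∀ y, |f y| ≤ M) →
      (∀ t > (0 : ℝ), ∀ x ∈ posOrthant d,
        |iteratedDeriv n (fun u => plP d α u f x) t| ≤ A * t ^ (β - n)) →
      (∀ t > (0 : ℝ), ∀ x ∈ posOrthant d,
        |plP d α t (besselLaguerrePotential d α lam f) x| ≤ M) ∧
      (∀ t > (0 : ℝ), ∀ x ∈ posOrthant d,
        |iteratedDeriv m (fun u => plP d α u (besselLaguerrePotential d α lam f) x) t| ≤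
          C * A * t ^ (β + lam - m)) := by
  set T := poissonLaguerreSemigroup hα
  have hT := isAnalyticContractionSemigroup_poissonLaguerreSemigroup hα
  obtain ⟨C, hC, hbound⟩ := hT.exists_norm_iteratedDeriv_besselPotential_le hlam hnm hm
  refine ⟨C, hC, fun f M A hf hM hA => ?_⟩
  let F : BoundedMeasurable (Fin d → Ioi (0 : ℝ)) :=
    .ofBound (fun x => f fun j => x j) (hf.comp (by fun_prop)) M fun x => hM _
  have hFM : ‖F‖ ≤ M := F.norm_le ((abs_nonneg _).trans (hM 0)) fun x => hM _
  have hJ := besselLaguerrePotential_eq_besselPotential hα hlam (g := f) (f := F) fun x => rfl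
  have hA' (t : ℝ) (ht : 0 < t) (x : Fin d → Ioi (0 : ℝ)) :
      ‖iteratedDeriv n T t F x‖ ≤ A * t ^ (β - n) := by
    rw [← iteratedDeriv_plP hα (g := f) (fun x => rfl) n ht x]
    exact hA t ht _ fun j _ => (x j).2
  have hcoe {x : Fin d → ℝ} (hx : x ∈ posOrthant d) :
      ∃ z : Fin d → Ioi (0 : ℝ), (fun j => (z j : ℝ)) = x := ⟨fun j => ⟨x j, hx j trivial⟩, rfl⟩
  refine ⟨fun t ht x hx => ?_, fun t ht x hx => ?_⟩ <;> obtain ⟨z, rfl⟩ := hcoe hx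
  · rw [plP_eq_poissonLaguerreSemigroup hα hJ ht]
    calc |T t (besselPotential T lam F) z|
        ≤ ‖T t (besselPotential T lam F)‖ := BoundedMeasurable.norm_apply_le _ z
      _ ≤ 1 * (1 * ‖F‖) := (T t).le_of_opNorm_le_of_le (hT.norm_le_one ht)
          ((besselPotential T lam).le_of_opNorm_le (hT.norm_besselPotential_le hlam) F)
      _ ≤ M := by simpa only [one_mul] using hFM
  · rw [iteratedDeriv_plP hα hJ m ht]
    refine (BoundedMeasurable.norm_apply_le _ z).trans (hbound F A (fun t ht => ?_) t ht)
    exact BoundedMeasurable.norm_le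
      ((norm_nonneg _).trans (hA' t ht fun _ => ⟨1, mem_Ioi.mpr one_pos⟩)) (hA' t ht)

theorem besselLaguerrePotential_bounded_on_lipschitz
    (d : ℕ) (hd : 1 ≤ d) (α : Fin d → ℝ) (hα : ∀ j, -(1 / 2 : ℝ) < α j)
    (β lam : ℝ) (hβ : 0 < β) (hlam : 0 < lam) :
    ∃ C > 0, ∀ (f : (Fin d → ℝ) → ℝ) (M A : ℝ), Measurable f → (∀ y, |f y| ≤ M) →
      (∀ t > (0 : ℝ), ∀ x ∈ posOrthant d,
        |iteratedDeriv (⌊β⌋₊ + 1) (fun u => plP d α u f x) t| ≤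
          A * t ^ (β - ((⌊β⌋₊ : ℝ) + 1))) →
      (∀ t > (0 : ℝ), ∀ x ∈ posOrthant d,
        |plP d α t (besselLaguerrePotential d α lam f) x| ≤ M) ∧
      (∀ t > (0 : ℝ), ∀ x ∈ posOrthant d,
        |iteratedDeriv (⌊β + lam⌋₊ + 1)
            (fun u => plP d α u (besselLaguerrePotential d α lam f) x) t| ≤
          C * (M + A) * t ^ (β + lam - ((⌊β + lam⌋₊ : ℝ) + 1))) := by
  obtain ⟨C, hC, hbound⟩ := besselLaguerrePotential_bounded_on_lipschitz_general
    (fun j => (by norm_num : (-1 : ℝ) < -(1 / 2)).trans (hα j)) hlam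
    (Nat.succ_le_succ (Nat.floor_mono (le_add_of_nonneg_right hlam.le)))
    (by exact_mod_cast Nat.lt_floor_add_one (β + lam))
  refine ⟨C, hC, fun f M A hf hM hA => ?_⟩
  obtain ⟨hsup, hlip⟩ := hbound f M A hf hM (by exact_mod_cast hA)
  refine ⟨hsup, fun t ht x hx => (hlip t ht x hx).trans ?_⟩
  push_cast
  gcongr
  exact le_add_of_nonneg_left ((abs_nonneg _).trans (hM x))
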